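/- Let A_{N,1}, …, A_{N,L} be independent families of N×N random matrices that are uniformly bounded in operator norm, and assume that each family, except possibly one, is permutation invariant. Fix n ≥ 2 and ℓ_1, …, ℓ_n ∈ {1,…,L} with ℓ_i ≠ ℓ_{i+1} for 1 ≤ i ≤ n−1. For each i ∈ {1,…,n} let d_i ≥ 1, k_i(1), …, k_i(d_i) ∈ K, and let g_{0,i}, …, g_{d_i,i} be cactus-type monomials (independent of N); set M_{N,i} = g_{0,i}(A_N) · A_{N,ℓ_i}^{(k_i(1))} · g_{1,i}(A_N) ⋯ A_{N,ℓ_i}^{(k_i(d_i))} · g_{d_i,i}(A_N) and ε_N = Δ[(M_{N,1} − ΔM_{N,1}) ⋯ (M_{N,n} − ΔM_{N,n})]. Then for every integer p ≥ 1, E[(1/N) Tr((ε_N ε_N*)^p)] → 0 as N → ∞. -/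

import Mathlib

open MeasureTheory ProbabilityTheory Filter Matrix Asymptotics
open scoped BigOperators ENNReal
open scoped Classical

noncomputable section

/-- The diagonal projection `Δ` on `N × N` complex matrices. -/
def dproj {N : ℕ} (A : Matrix (Fin N) (Fin N) ℂ) : Matrix (Fin N) (Fin N) ℂ :=
  Matrix.of fun i j => if i = j then A i j else 0

/-- The operator norm of a matrix acting on `ℓ²({1,…,N})`. -/
def matOpNorm {N : ℕ} (A : Matrix (Fin N) (Fin N) ℂ) : ℝ :=
  ‖Matrix.toEuclideanCLM (𝕜 := ℂ) A‖

/-! ### Multigraph combinatorics -/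

section Graph

variable {V E : Type} (src tgt : E → V)

/-- Adjacency through an edge avoiding a forbidden set `F` of edges
(direction is ignored). -/
def adjOn (F : Set E) (a b : V) : Prop :=
  ∃ e, e ∉ F ∧ ((src e = a ∧ tgt e = b) ∨ (src e = b ∧ tgt e = a))

/-- Reachability in the graph, using only edges outside `F`. -/
def reachOn (F : Set E) : V → V → Prop :=
  Relation.ReflTransGen (adjOn src tgt F)

lemma adjOn_symm (F : Set E) : Symmetric (adjOn src tgt F) := by
  rintro a b ⟨e, he, h⟩
  exact ⟨e, he, h.symm⟩

/-- The setoid of connectivity using edges outside `F`. -/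
def connSetoid (F : Set E) : Setoid V :=
  ⟨reachOn src tgt F,
    ⟨fun _ => Relation.ReflTransGen.refl,
     fun h => (@Relation.ReflTransGen.symmetric _ _ ⟨fun _ _ h' => adjOn_symm src tgt F h'⟩).symm _ _ h,
     fun h h' => Relation.ReflTransGen.trans h h'⟩⟩

/-- Number of connected components of the graph with the edges in `F` deleted. -/
def ncompAvoiding (F : Set E) : ℕ :=
  Nat.card (Quotient (connSetoid src tgt F))

/-- Number of connected components. -/
def ncomp : ℕ := ncompAvoiding src tgt ∅

/-- The graph is connected. -/
def IsConnectedGraph : Prop := ∀ a b : V, reachOn src tgt ∅ a b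

/-- A cut edge (bridge): deleting it disconnects its endpoints. -/
def IsCutEdge (e : E) : Prop := ¬ reachOn src tgt {e} (src e) (tgt e)

/-- The set of cut edges. -/
def cutEdges : Set E := {e | IsCutEdge src tgt e}

/-- The setoid whose classes are the two-edge connected components
(connected components after deleting all cut edges). -/
def teccSetoid : Setoid V := connSetoid src tgt (cutEdges src tgt)

/-- Degree, in the forest of two-edge connected components, of a
two-edge connected component: the number of cut edges incident to it. -/
def teccDeg (c : Quotient (teccSetoid src tgt)) : ℕ :=
  Nat.card {e : E // IsCutEdge src tgt e ∧
    (Quotient.mk (teccSetoid src tgt) (src e) = c ∨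
      Quotient.mk (teccSetoid src tgt) (tgt e) = c)}

/-- `𝔣(G)`: the number of leaves of the forest of two-edge connected components,
single-vertex trees of the forest counting twice. -/
def frak : ℕ :=
  Nat.card {c : Quotient (teccSetoid src tgt) // teccDeg src tgt c = 1} +
    2 * Nat.card {c : Quotient (teccSetoid src tgt) // teccDeg src tgt c = 0}

end Graph

/-! ### Graph monomials -/

/-- A graph monomial: a finite directed multigraph with two roots and edges
labelled by a family index in `Fin L` and an index in `K`.  (Connectedness is
required separately via `IsConnectedGraph`.) -/
structure GraphMonomial (L : ℕ) (K : Type) where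
  V : Type
  E : Type
  fintV : Fintype V
  fintE : Fintype E
  src : E → V
  tgt : E → V
  vin : V
  vout : V
  labL : E → Fin L
  labK : E → K

attribute [instance] GraphMonomial.fintV GraphMonomial.fintE

namespace GraphMonomial

variable {L : ℕ} {K : Type} (g : GraphMonomial L K)

/-- Evaluation of a graph monomial in a collection of matrices. -/
def eval {N : ℕ} (A : Fin L → K → Matrix (Fin N) (Fin N) ℂ) :
    Matrix (Fin N) (Fin N) ℂ :=
  Matrix.of fun i j => ∑ φ : g.V → Fin N,
    if φ g.vin = j ∧ φ g.vout = i then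
      ∏ e : g.E, A (g.labL e) (g.labK e) (φ (g.tgt e)) (φ (g.src e))
    else 0

/-- The starting vertex of a step `(e, b)`: `e` traversed forward if `b = true`,
backward otherwise. -/
def stepSrc (s : g.E × Bool) : g.V := if s.2 then g.src s.1 else g.tgt s.1

/-- The ending vertex of a step. -/
def stepTgt (s : g.E × Bool) : g.V := if s.2 then g.tgt s.1 else g.src s.1

/-- A simple cycle of the underlying undirected multigraph: a nonempty cyclic
sequence of steps with pairwise distinct edges and pairwise distinct vertices. -/
def IsSimpleCycle (c : List (g.E × Bool)) : Prop :=
  ∃ h : c ≠ [],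
    (∀ i : Fin c.length,
      g.stepTgt (c.get i) =
        g.stepSrc (c.get ⟨((i : ℕ) + 1) % c.length,
          Nat.mod_lt _ (List.length_pos_iff.mpr h)⟩)) ∧
    (c.map Prod.fst).Nodup ∧ (c.map g.stepSrc).Nodup

/-- A cycle is directed when it traverses all its edges consistently with
their orientations (one way or the other). -/
def IsDirectedCycleList (c : List (g.E × Bool)) : Prop :=
  (∀ s ∈ c, s.2 = true) ∨ (∀ s ∈ c, s.2 = false)

/-- `S` is the edge set of some simple cycle. -/
def IsCycleEdgeSet (S : Finset g.E) : Prop :=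
  ∃ c, g.IsSimpleCycle c ∧ (c.map Prod.fst).toFinset = S

/-- The underlying graph is an oriented cactus: it is connected, every simple
cycle is directed, and every edge belongs to exactly one simple cycle. -/
def IsOrientedCactus : Prop :=
  IsConnectedGraph g.src g.tgt ∧
  (∀ c, g.IsSimpleCycle c → g.IsDirectedCycleList c) ∧
  (∀ e : g.E, ∃! S : Finset g.E, g.IsCycleEdgeSet S ∧ e ∈ S)

/-- A cactus-type monomial: an oriented cactus whose input and output coincide. -/
def IsCactusType : Prop := g.vin = g.vout ∧ g.IsOrientedCactus

/-- A member of `ℱ`: a directed simple path (oriented from the input, at the far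
right, to the output, at the far left) with oriented cacti attached to the
vertices of the path (the root of each cactus being a path vertex). -/
def IsPathCactusType : Prop :=
  IsConnectedGraph g.src g.tgt ∧
  ∃ (d : ℕ) (v : Fin (d + 1) → g.V) (f : Fin d → g.E),
    Function.Injective v ∧ Function.Injective f ∧
    (∀ j : Fin d, g.src (f j) = v j.succ ∧ g.tgt (f j) = v j.castSucc) ∧
    g.vin = v (Fin.last d) ∧ g.vout = v 0 ∧
    (∀ c, g.IsSimpleCycle c → g.IsDirectedCycleList c ∧ ∀ s ∈ c, s.1 ∉ Set.range f) ∧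
    (∀ e : g.E, e ∉ Set.range f →
      ∃! S : Finset g.E, g.IsCycleEdgeSet S ∧ e ∈ S) ∧
    (∀ w : g.V, ∃! j : Fin (d + 1), reachOn g.src g.tgt (Set.range f) w (v j))

end GraphMonomial
/-! ### Random matrices, expectations, test graphs -/

/-- The entries of the random matrix `X` are measurable. -/
def EntriesMeasurable {N : ℕ} {Ω : Type} [MeasurableSpace Ω]
    (X : Ω → Matrix (Fin N) (Fin N) ℂ) : Prop :=
  ∀ i j, Measurable fun ω => X ω i j

/-- The entries of the random matrix `X` are essentially bounded. -/
def EntriesBounded {N : ℕ} {Ω : Type} [MeasurableSpace Ω] (μ : Measure Ω)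
    (X : Ω → Matrix (Fin N) (Fin N) ℂ) : Prop :=
  ∃ C : ℝ, ∀ᵐ ω ∂μ, ∀ i j, ‖X ω i j‖ ≤ C

/-- The σ-algebra generated by the entries of the matrices of a family. -/
def famSigma {N : ℕ} {Ω K : Type} [MeasurableSpace Ω]
    (A : K → Ω → Matrix (Fin N) (Fin N) ℂ) : MeasurableSpace Ω :=
  ⨆ k : K, ⨆ i : Fin N, ⨆ j : Fin N,
    MeasurableSpace.comap (fun ω => A k ω i j) inferInstance

/-- Permutation invariance of a family of `N × N` random matrices. -/
def PermInvariant {N : ℕ} {Ω K : Type} [MeasurableSpace Ω] (μ : Measure Ω)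
    (A : K → Ω → Matrix (Fin N) (Fin N) ℂ) : Prop :=
  ∀ σ : Equiv.Perm (Fin N),
    Measure.map (fun ω => fun (k : K) (i j : Fin N) => A k ω (σ i) (σ j)) μ =
      Measure.map (fun ω => fun (k : K) (i j : Fin N) => A k ω i j) μ

/-- A test graph with matrix-valued edge labels. -/
structure TestGraph (N : ℕ) (Ω : Type) where
  V : Type
  E : Type
  fintV : Fintype V
  fintE : Fintype E
  src : E → V
  tgt : E → V
  lab : E → Ω → Matrix (Fin N) (Fin N) ℂ

attribute [instance] TestGraph.fintV TestGraph.fintE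

namespace TestGraph

variable {N : ℕ} {Ω : Type} [MeasurableSpace Ω]

/-- Number of connected components `c(T)` of a test graph. -/
def ncc (T : TestGraph N Ω) : ℕ := ncomp T.src T.tgt

/-- The (unnormalized) trace observable of a test graph. -/
def tauInner (T : TestGraph N Ω) (ω : Ω) : ℂ :=
  ∑ φ : T.V → Fin N, ∏ e : T.E, T.lab e ω (φ (T.tgt e)) (φ (T.src e))

/-- The (unnormalized) injective trace observable of a test graph. -/
def tau0Inner (T : TestGraph N Ω) (ω : Ω) : ℂ :=
  ∑ φ : T.V → Fin N,
    if Function.Injective φ then ∏ e : T.E, T.lab e ω (φ (T.tgt e)) (φ (T.src e)) else 0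

/-- `τ_N[T]`. -/
def tau (T : TestGraph N Ω) (μ : Measure Ω) : ℂ :=
  ((N : ℂ) ^ T.ncc)⁻¹ * ∫ ω, T.tauInner ω ∂μ

/-- `τ⁰_N[T]`. -/
def tau0 (T : TestGraph N Ω) (μ : Measure Ω) : ℂ :=
  ((N : ℂ) ^ T.ncc)⁻¹ * ∫ ω, T.tau0Inner ω ∂μ

/-- The quotient test graph `T^π` associated with a partition `π` of the
vertices of `T`. -/
def quot (T : TestGraph N Ω) (π : Setoid T.V) : TestGraph N Ω where
  V := Quotient π
  E := T.E
  fintV := @Quotient.fintype _ T.fintV π fun _ _ => Classical.propDecidable _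
  fintE := T.fintE
  src := fun e => Quotient.mk π (T.src e)
  tgt := fun e => Quotient.mk π (T.tgt e)
  lab := T.lab

end TestGraph

/-- Monomial `D₀ X_{k(1)} D₁ ⋯ X_{k(d)} D_d` evaluated in a family of matrices:
the coefficients are given as an arbitrary function `D : ℕ → Matrix`. -/
def monomialEval {K : Type} {N : ℕ} (A : K → Matrix (Fin N) (Fin N) ℂ)
    (dd : ℕ) (kk : ℕ → K) (D : ℕ → Matrix (Fin N) (Fin N) ℂ) :
    Matrix (Fin N) (Fin N) ℂ :=
  D 0 * (List.ofFn fun j : Fin dd => A (kk ((j : ℕ) + 1)) * D ((j : ℕ) + 1)).prod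

/-- The centered product `(M₁ - ΔM₁)(M₂ - ΔM₂)⋯(Mₙ - ΔMₙ)`. -/
def centeredProd {N n : ℕ} (M : Fin n → Matrix (Fin N) (Fin N) ℂ) :
    Matrix (Fin N) (Fin N) ℂ :=
  (List.ofFn fun i : Fin n => M i - dproj (M i)).prod

/-- Mutual independence of the families `A 1, …, A L` of random matrices. -/
def IndepFamilies {Ω K : Type} {L : ℕ} [MeasurableSpace Ω] (μ : Measure Ω)
    (A : (N : ℕ) → Fin L → K → Ω → Matrix (Fin N) (Fin N) ℂ) : Prop :=
  ∀ N : ℕ, ProbabilityTheory.iIndep (fun ℓ : Fin L => famSigma (A N ℓ)) μ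

/-- Uniform boundedness, in operator norm, of families of random matrices. -/
def UnifOpNormBound {Ω K : Type} {L : ℕ} [MeasurableSpace Ω] (μ : Measure Ω)
    (A : (N : ℕ) → Fin L → K → Ω → Matrix (Fin N) (Fin N) ℂ) : Prop :=
  ∃ C : ℝ, ∀ (N : ℕ) (ℓ : Fin L) (k : K), ∀ᵐ ω ∂μ, matOpNorm (A N ℓ k ω) ≤ C

/-- The growth bound (MS) for the family `A · ℓ`:
for all graph monomials `g₁, …, gₘ` labelled in the single family `ℓ` and having
equal input and output, `E[∏ᵢ Tr gᵢ(A_N)] = O(N^{Σᵢ 𝔣(gᵢ)/2})` as `N → ∞`. -/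
def MSBound {Ω K : Type} {L : ℕ} [MeasurableSpace Ω] (μ : Measure Ω)
    (A : (N : ℕ) → Fin L → K → Ω → Matrix (Fin N) (Fin N) ℂ) (ℓ : Fin L) : Prop :=
  ∀ (m : ℕ), 1 ≤ m → ∀ gs : Fin m → GraphMonomial L K,
    (∀ i : Fin m, IsConnectedGraph (gs i).src (gs i).tgt ∧
      (∀ e, (gs i).labL e = ℓ) ∧ (gs i).vin = (gs i).vout) →
    (fun N : ℕ => ∫ ω, ∏ i : Fin m,
        Matrix.trace ((gs i).eval fun ℓ' k => A N ℓ' k ω) ∂μ)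
      =O[atTop] fun N : ℕ => (N : ℝ) ^ ((∑ i : Fin m, (frak (gs i).src (gs i).tgt : ℝ)) / 2)
/-- The monomial `g₀(A) X_{k(1)} g₁(A) ⋯ X_{k(d)} g_d(A)` with graph-monomial
coefficients, evaluated at the family `A ℓi`. -/
def cactusMonomialEval {L : ℕ} {K : Type} {N : ℕ}
    (A : Fin L → K → Matrix (Fin N) (Fin N) ℂ) (ℓi : Fin L) (dd : ℕ)
    (kk : ℕ → K) (gg : ℕ → GraphMonomial L K) : Matrix (Fin N) (Fin N) ℂ :=
  (gg 0).eval A *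
    (List.ofFn fun j : Fin dd =>
      A ℓi (kk ((j : ℕ) + 1)) * (gg ((j : ℕ) + 1)).eval A).prod

/-!
`E[Tr (ε ε*)^p]` is a sum over the labellings of the vertices of a graph by `{1, …, N}`, and the
projections `1 - Δ` say that consecutive roots carry different labels. We show that it is `O(1)`.

Conjugating all families by one permutation does not change the trace, so by independence and
permutation invariance the families may be replaced by their conjugates under independent uniform
permutations, the exceptional family included. For a labelling with `w` distinct values, the average
over the permutations factorizes over the families and turns each factor into a sum over injective
labellings, divided by about `N ^ w`.

A sum over the labellings of a connected bridgeless graph with contractions on its edges, with the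
label of one vertex fixed, is bounded by a constant: every entry of a contraction is four times an
average of products of functions bounded by one, which removes the ears of the graph one at a time.
Injectivity costs only further factors `1 - 1(i, j)`, which are affine in the entries of a
contraction. To make the graph of one colour connected and bridgeless, a hub is attached to it by
rank-one contractions with entries `1 / √N`. Counting the edges that this takes gives `O(N ^ (-w))`
for each labelling as soon as the bipartite incidence graph between the vertices and the coloured
components has a cycle. The closed chain of colours `ℓ_1 ≠ ℓ_2 ≠ ⋯ ≠ ℓ_n`, closed up by the outer
`Δ`, provides one.
-/

/-! ### Reachability in multigraphs -/

section Reachability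

variable {V E : Type} {src tgt : E → V} {F F' : Set E} {a b : V}

lemma reachOn_symm (h : reachOn src tgt F a b) : reachOn src tgt F b a :=
  (connSetoid src tgt F).symm h

lemma reachOn_of_edge {e : E} (he : e ∉ F) : reachOn src tgt F (src e) (tgt e) :=
  .single ⟨e, he, Or.inl ⟨rfl, rfl⟩⟩

lemma reachOn_lift {V' E' : Type} {src' tgt' : E' → V'} {G : Set E'} (f : V → V')
    (hf : ∀ e, e ∉ F → reachOn src' tgt' G (f (src e)) (f (tgt e)))
    (h : reachOn src tgt F a b) : reachOn src' tgt' G (f a) (f b) := by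
  induction h with
  | refl => exact .refl
  | tail _ hstep ih =>
    obtain ⟨e, he, ⟨rfl, rfl⟩ | ⟨rfl, rfl⟩⟩ := hstep
    · exact ih.trans (hf e he)
    · exact ih.trans (reachOn_symm (hf e he))

lemma reachOn_mono (hF : F' ⊆ F) (h : reachOn src tgt F a b) : reachOn src tgt F' a b :=
  reachOn_lift id (fun _ he => reachOn_of_edge fun he' => he (hF he')) h

/-- The edge `e` joins `a` and `b`, in either direction. -/
def Joins (src tgt : E → V) (e : E) (a b : V) : Prop :=
  (src e = a ∧ tgt e = b) ∨ (src e = b ∧ tgt e = a)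

lemma Joins.reachOn_iff {e : E} (h : Joins src tgt e a b) :
    reachOn src tgt F a b ↔ reachOn src tgt F (src e) (tgt e) := by
  rcases h with ⟨rfl, rfl⟩ | ⟨rfl, rfl⟩
  · exact Iff.rfl
  · exact ⟨reachOn_symm, reachOn_symm⟩

lemma exists_last_exit {U : Set V} (h : reachOn src tgt F a b) (ha : a ∈ U) (hb : b ∉ U) :
    ∃ e ∉ F, ∃ x ∈ U, ∃ y ∉ U, Joins src tgt e x y ∧
      reachOn src tgt {f | src f ∈ U ∨ tgt f ∈ U} y b := by
  suffices H : (a ∉ U ∧ reachOn src tgt {f | src f ∈ U ∨ tgt f ∈ U} a b) ∨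
      ∃ e ∉ F, ∃ x ∈ U, ∃ y ∉ U, Joins src tgt e x y ∧
        reachOn src tgt {f | src f ∈ U ∨ tgt f ∈ U} y b from H.resolve_left fun h => h.1 ha
  clear ha
  induction h using Relation.ReflTransGen.head_induction_on with
  | refl => exact Or.inl ⟨hb, .refl⟩
  | @head x y hstep _ ih =>
    refine ih.elim (fun ⟨hy, hyb⟩ => ?_) Or.inr
    obtain ⟨e, he, hxy⟩ := hstep
    by_cases hx : x ∈ U
    · exact Or.inr ⟨e, he, x, hx, y, hy, hxy, hyb⟩
    · refine Or.inl ⟨hx, .head ⟨e, ?_, hxy⟩ hyb⟩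
      rcases hxy with ⟨rfl, rfl⟩ | ⟨rfl, rfl⟩ <;> simp [hx, hy]

lemma reachOn_insert_or (f : E) (h : reachOn src tgt F a b) :
    reachOn src tgt (insert f F) a b ∨
      (reachOn src tgt (insert f F) a (src f) ∧ reachOn src tgt (insert f F) (tgt f) b) ∨
      (reachOn src tgt (insert f F) a (tgt f) ∧ reachOn src tgt (insert f F) (src f) b) := by
  induction h with
  | refl => exact Or.inl .refl
  | @tail x y _ hstep ih =>
    obtain ⟨e, he, hxy⟩ := hstep
    rcases eq_or_ne e f with rfl | hef
    · rcases hxy with ⟨rfl, rfl⟩ | ⟨rfl, rfl⟩ <;> rcases ih with h | ⟨h, _⟩ | ⟨h, _⟩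
      · exact Or.inr (Or.inl ⟨h, .refl⟩)
      · exact Or.inr (Or.inl ⟨h, .refl⟩)
      · exact Or.inl h
      · exact Or.inr (Or.inr ⟨h, .refl⟩)
      · exact Or.inl h
      · exact Or.inr (Or.inr ⟨h, .refl⟩)
    · have hxy' : reachOn src tgt (insert f F) x y := .single ⟨e, by simp [hef, he], hxy⟩
      exact ih.imp (·.trans hxy') (Or.imp (And.imp_right (·.trans hxy'))
        (And.imp_right (·.trans hxy')))

lemma reachOn_insert_cutEdges [Finite E] {e : E} (he : ¬ IsCutEdge src tgt e) :
    reachOn src tgt (insert e (cutEdges src tgt)) (src e) (tgt e) := by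
  suffices H : ∀ D : Set E, D.Finite → D ⊆ cutEdges src tgt →
      reachOn src tgt (insert e D) (src e) (tgt e) from H _ (Set.toFinite _) subset_rfl
  intro D hD
  induction D, hD using Set.Finite.induction_on with
  | empty =>
    intro _
    simpa [IsCutEdge] using he
  | @insert f D _ _ ih =>
    intro hsub
    have hfcut : IsCutEdge src tgt f := hsub (Set.mem_insert _ _)
    have hef : e ≠ f := fun h => he (h ▸ hfcut)
    have hmono : ({f} : Set E) ⊆ insert f (insert e D) := by simp
    have hedge : reachOn src tgt {f} (src e) (tgt e) := reachOn_of_edge (by simpa using hef)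
    rw [Set.insert_comm]
    rcases reachOn_insert_or f (ih fun x hx => hsub (Set.mem_insert_of_mem _ hx)) with
      h | ⟨h₁, h₂⟩ | ⟨h₁, h₂⟩
    · exact h
    · exact absurd (((reachOn_symm (reachOn_mono hmono h₁)).trans hedge).trans
        (reachOn_symm (reachOn_mono hmono h₂))) hfcut
    · exact absurd (((reachOn_mono hmono h₂).trans (reachOn_symm hedge)).trans
        (reachOn_mono hmono h₁)) hfcut

lemma ncompAvoiding_insert_le [Finite V] (f : E) (D : Set E) :
    ncompAvoiding src tgt (insert f D) ≤ ncompAvoiding src tgt D + 1 := by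
  rw [ncompAvoiding, ncompAvoiding, ← Finite.card_option]
  refine Nat.card_le_card_of_injective
    (fun q : Quotient (connSetoid src tgt (insert f D)) =>
      if q = Quotient.mk _ (tgt f) then none
      else some (Quotient.mk (connSetoid src tgt D) q.out)) ?_
  intro p q hpq
  by_cases hp : p = Quotient.mk _ (tgt f) <;> by_cases hq : q = Quotient.mk _ (tgt f)
  · rw [hp, hq]
  · simp [hp, hq] at hpq
  · simp [hp, hq] at hpq
  · simp only [hp, hq, if_false, Option.some.injEq] at hpq
    have hpo : p = Quotient.mk _ p.out := (Quotient.out_eq p).symm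
    have hqo : q = Quotient.mk _ q.out := (Quotient.out_eq q).symm
    have h : reachOn src tgt D p.out q.out := Quotient.exact hpq
    rcases reachOn_insert_or f h with h | ⟨_, h⟩ | ⟨h, _⟩
    · rw [hpo, hqo]
      exact Quotient.sound h
    · exact absurd (hqo.trans (Quotient.sound (reachOn_symm h))) hq
    · exact absurd (hpo.trans (Quotient.sound h)) hp

lemma ncompAvoiding_le_ncard_add_one [Finite V] [Finite E] (hconn : IsConnectedGraph src tgt)
    (D : Set E) : ncompAvoiding src tgt D ≤ D.ncard + 1 := by
  induction D, D.toFinite using Set.Finite.induction_on with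
  | empty =>
    have : Subsingleton (Quotient (connSetoid src tgt ∅)) :=
      ⟨by rintro ⟨x⟩ ⟨y⟩; exact Quotient.sound (hconn x y)⟩
    simpa [ncompAvoiding] using Finite.card_le_one_iff_subsingleton.mpr this
  | @insert f D hfD _ ih =>
    rw [Set.ncard_insert_of_notMem hfD (Set.toFinite _)]
    exact (ncompAvoiding_insert_le f D).trans (Nat.succ_le_succ ih)

end Reachability

/-! ### Contractions as averages of products of bounded functions -/

section OpNorm

open scoped Matrix.Norms.L2Operator

variable {ι : Type*} [Fintype ι] [DecidableEq ι] (B : Matrix ι ι ℂ)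

lemma sum_sq_mulVec_le (x : ι → ℂ) :
    ∑ i, ‖(B *ᵥ x) i‖ ^ 2 ≤ ‖B‖ ^ 2 * ∑ i, ‖x i‖ ^ 2 := by
  have h := pow_le_pow_left₀ (norm_nonneg _) (Matrix.l2_opNorm_mulVec B (WithLp.toLp 2 x)) 2
  rw [mul_pow, EuclideanSpace.norm_sq_eq, EuclideanSpace.norm_sq_eq] at h
  simpa using h

lemma l2_opNorm_le_of_sum_sq_mulVec_le {c : ℝ} (hc : 0 ≤ c)
    (h : ∀ x : ι → ℂ, ∑ i, ‖(B *ᵥ x) i‖ ^ 2 ≤ c ^ 2 * ∑ i, ‖x i‖ ^ 2) : ‖B‖ ≤ c := by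
  rw [← Matrix.l2_opNorm_toEuclideanCLM]
  refine ContinuousLinearMap.opNorm_le_bound _ hc fun x => le_of_sq_le_sq ?_ (by positivity)
  rw [mul_pow, EuclideanSpace.norm_sq_eq, EuclideanSpace.norm_sq_eq]
  simpa using h x

lemma l2_opNorm_transpose_le : ‖Bᵀ‖ ≤ ‖B‖ := by
  refine l2_opNorm_le_of_sum_sq_mulVec_le _ (norm_nonneg B) fun x => ?_
  have hstar : Bᴴ *ᵥ star x = star (Bᵀ *ᵥ x) := by
    rw [Matrix.star_mulVec, Matrix.vecMul_conjTranspose]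
    ext i
    simp [Matrix.mulVec, dotProduct]
  simpa [hstar, Matrix.l2_opNorm_conjTranspose] using sum_sq_mulVec_le Bᴴ (star x)

lemma sum_sq_row_le (i : ι) : ∑ j, ‖B i j‖ ^ 2 ≤ ‖B‖ ^ 2 := by
  have h := sum_sq_mulVec_le Bᵀ (Pi.single i 1)
  have hsingle : ∑ j, ‖(Pi.single i 1 : ι → ℂ) j‖ ^ 2 = 1 := by
    rw [Finset.sum_eq_single i] <;> simp +contextual
  rw [hsingle, mul_one] at h
  simp only [Matrix.mulVec_single_one, Matrix.col_apply, Matrix.transpose_apply] at h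
  exact h.trans (pow_le_pow_left₀ (norm_nonneg _) (l2_opNorm_transpose_le B) 2)

lemma norm_entry_le_l2_opNorm (i j : ι) : ‖B i j‖ ≤ ‖B‖ :=
  le_of_sq_le_sq ((Finset.single_le_sum (f := fun j => ‖B i j‖ ^ 2)
    (fun _ _ => by positivity) (Finset.mem_univ j)).trans (sum_sq_row_le B i)) (norm_nonneg _)

lemma l2_opNorm_diagonal_le_one {x : ι → ℂ} (hx : ∀ i, ‖x i‖ ≤ 1) : ‖Matrix.diagonal x‖ ≤ 1 := by
  rw [Matrix.l2_opNorm_diagonal]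
  exact (pi_norm_le_iff_of_nonneg zero_le_one).mpr hx

lemma l2_opNorm_one_le : ‖(1 : Matrix ι ι ℂ)‖ ≤ 1 := by
  rw [← Matrix.diagonal_one]
  exact l2_opNorm_diagonal_le_one (by simp)

/-- The matrix whose row `i₀` is constant equal to `1 / √|ι|` and whose other rows vanish. It is the
contraction put on the edges between a graph and its hub, where the label is pinned to `i₀`. -/
def hubMatrix (i₀ : ι) : Matrix ι ι ℂ :=
  Matrix.of fun i _ => if i = i₀ then ((Real.sqrt (Fintype.card ι) : ℝ) : ℂ)⁻¹ else 0

lemma l2_opNorm_hubMatrix_le (i₀ : ι) : ‖hubMatrix i₀‖ ≤ 1 := by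
  have hcard : 0 < (Fintype.card ι : ℝ) := by exact_mod_cast Fintype.card_pos_iff.mpr ⟨i₀⟩
  refine l2_opNorm_le_of_sum_sq_mulVec_le _ zero_le_one fun x => ?_
  rw [Finset.sum_eq_single i₀ (fun i _ hi => by simp [hubMatrix, Matrix.mulVec, dotProduct, hi])
    (by simp)]
  have hrow : (hubMatrix i₀ *ᵥ x) i₀ = ((Real.sqrt (Fintype.card ι) : ℝ) : ℂ)⁻¹ * ∑ j, x j := by
    simp [hubMatrix, Matrix.mulVec, dotProduct, Finset.mul_sum]
  rw [hrow, norm_mul, mul_pow, norm_inv, Complex.norm_real, Real.norm_of_nonneg (by positivity),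
    inv_pow, Real.sq_sqrt hcard.le, one_pow, one_mul, inv_mul_le_iff₀ hcard]
  calc ‖∑ j, x j‖ ^ 2 ≤ (∑ j, ‖x j‖) ^ 2 := by
        gcongr
        exact norm_sum_le _ _
    _ ≤ Fintype.card ι * ∑ j, ‖x j‖ ^ 2 := by
        simpa using sq_sum_le_card_mul_sum_sq (s := Finset.univ) (f := fun j => ‖x j‖)

end OpNorm

section Riesz

variable {n : Type*} [Fintype n]

/-- The sign `±1` attached to a Boolean. -/
def signOf (b : Bool) : ℂ := if b then 1 else -1

lemma norm_signOf (b : Bool) : ‖signOf b‖ = 1 := by cases b <;> simp [signOf]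

/-- The Riesz product `∏ (1 + i r_z b_z)`, as a function of the signs `r`. Its correlation with the
sign `r_z` recovers `i b_z`, and its modulus is controlled by `∑ b_z ^ 2`. -/
def rieszProd (b : n → ℝ) (r : n → Bool) : ℂ :=
  ∏ z, (1 + Complex.I * signOf (r z) * (b z : ℂ))

lemma norm_rieszProd_le {b : n → ℝ} (hb : ∑ z, b z ^ 2 ≤ 1) (r : n → Bool) :
    ‖rieszProd b r‖ ≤ 2 := by
  have hfactor : ∀ z, ‖1 + Complex.I * signOf (r z) * (b z : ℂ)‖ ^ 2 = 1 + b z ^ 2 := by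
    intro z
    rw [← Complex.normSq_eq_norm_sq, Complex.normSq_apply]
    cases h : r z <;> simp [signOf] <;> ring
  refine le_of_sq_le_sq ?_ zero_le_two
  calc ‖rieszProd b r‖ ^ 2 = ∏ z, (1 + b z ^ 2) := by
        rw [rieszProd, norm_prod, ← Finset.prod_pow]
        exact Finset.prod_congr rfl fun z _ => hfactor z
    _ ≤ ∏ z, Real.exp (b z ^ 2) :=
        Finset.prod_le_prod (fun z _ => by positivity) fun z _ =>
          (add_comm _ _).trans_le (Real.add_one_le_exp _)
    _ = Real.exp (∑ z, b z ^ 2) := (Real.exp_sum _ _).symm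
    _ ≤ Real.exp 1 := Real.exp_le_exp.mpr hb
    _ ≤ 2 ^ 2 := by linarith [Real.exp_one_lt_d9]

variable [DecidableEq n]

lemma sum_rieszProd_mul_signOf (b : n → ℝ) (y : n) :
    ∑ r : n → Bool, rieszProd b r * signOf (r y) =
      2 ^ Fintype.card n * (Complex.I * b y) := by
  have hprod : ∀ r : n → Bool, rieszProd b r * signOf (r y) =
      ∏ z, ((1 + Complex.I * signOf (r z) * (b z : ℂ)) *
        (if z = y then signOf (r z) else 1)) := by
    intro r
    rw [Finset.prod_mul_distrib, rieszProd]
    simp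
  have hfactor : ∀ z, (∑ β : Bool, (1 + Complex.I * signOf β * (b z : ℂ)) *
      (if z = y then signOf β else 1)) = 2 * (if z = y then Complex.I * b y else 1) := by
    intro z
    rcases eq_or_ne z y with rfl | hz
    · simp only [Fintype.sum_bool, signOf, ↓reduceIte, Bool.false_eq_true]
      ring
    · simp only [Fintype.sum_bool, signOf, hz, ↓reduceIte, Bool.false_eq_true]
      ring
  have hfubini := Fintype.piFinset_univ (α := n) (β := fun _ => Bool) ▸
    Finset.prod_univ_sum (fun _ : n => (Finset.univ : Finset Bool))
      fun z β => (1 + Complex.I * signOf β * (b z : ℂ)) * (if z = y then signOf β else 1)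
  rw [Finset.sum_congr rfl fun r _ => hprod r, ← hfubini,
    Finset.prod_congr rfl fun z _ => hfactor z, Finset.prod_mul_distrib]
  simp

lemma exists_average_of_rows {m : Type*} {B : Matrix m n ℂ} (hB : ∀ i, ∑ j, ‖B i j‖ ^ 2 ≤ 1) :
    ∃ (u : (n → Bool) → m → ℂ) (s : (n → Bool) → n → ℂ),
      (∀ r i, ‖u r i‖ ≤ 1) ∧ (∀ r j, ‖s r j‖ ≤ 1) ∧
      ∀ i j, B i j = 4 / 2 ^ Fintype.card n * ∑ r, u r i * s r j := by
  set re : m → (n → Bool) → ℂ := fun i => rieszProd fun j => (B i j).re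
  set im : m → (n → Bool) → ℂ := fun i => rieszProd fun j => (B i j).im
  refine ⟨fun r i => (re i r / Complex.I + im i r) / 4, fun r j => signOf (r j),
    fun r i => ?_, fun r j => (norm_signOf _).le, fun i j => ?_⟩
  · have hre : ‖re i r‖ ≤ 2 := norm_rieszProd_le ((Finset.sum_le_sum fun j _ => by
      rw [← sq_abs]; gcongr; exact Complex.abs_re_le_norm _).trans (hB i)) r
    have him : ‖im i r‖ ≤ 2 := norm_rieszProd_le ((Finset.sum_le_sum fun j _ => by
      rw [← sq_abs]; gcongr; exact Complex.abs_im_le_norm _).trans (hB i)) r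
    have hadd := norm_add_le (re i r / Complex.I) (im i r)
    rw [norm_div _ Complex.I, Complex.norm_I, div_one] at hadd
    rw [norm_div, Complex.norm_ofNat, div_le_one (by norm_num)]
    linarith
  · have hsplit : ∑ r : n → Bool, (re i r / Complex.I + im i r) / 4 * signOf (r j) =
        (∑ r, re i r * signOf (r j)) / (4 * Complex.I) + (∑ r, im i r * signOf (r j)) / 4 := by
      rw [Finset.sum_div, Finset.sum_div, ← Finset.sum_add_distrib]
      refine Finset.sum_congr rfl fun r _ => ?_
      field_simp
    have hpow : (2 : ℂ) ^ Fintype.card n ≠ 0 := pow_ne_zero _ two_ne_zero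
    rw [hsplit, sum_rieszProd_mul_signOf, sum_rieszProd_mul_signOf]
    field_simp
    conv_lhs => rw [← Complex.re_add_im (B i j)]
    ring

end Riesz

/-! ### Sums over vertex labellings with a pinned root -/

section PinnedSums

open scoped Matrix.Norms.L2Operator

variable {V ι : Type*} [Fintype V] [Fintype ι]

/-- The labellings of `V` by `ι` that take the value `i₀` outside of `T`. -/
def pinned (T : Finset V) (i₀ : ι) : Finset (V → ι) :=
  Finset.univ.filter fun φ => ∀ v, v ∉ T → φ v = i₀

lemma mem_pinned {T : Finset V} {i₀ : ι} {φ : V → ι} :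
    φ ∈ pinned T i₀ ↔ ∀ v, v ∉ T → φ v = i₀ := by simp [pinned]

/-- The weight `w`, summed over the labellings pinned outside of `T`, defines a multilinear form
bounded by `c` on families of functions of the labels bounded by one. Testing against such families
rather than summing `w` alone is what makes the bound stable under multiplication by entries of
contractions. -/
def WeightBound (T : Finset V) (i₀ : ι) (w : (V → ι) → ℂ) (c : ℝ) : Prop :=
  ∀ x : V → ι → ℂ, (∀ v i, ‖x v i‖ ≤ 1) →
    ‖∑ φ ∈ pinned T i₀, w φ * ∏ v, x v (φ v)‖ ≤ c

variable {T : Finset V} {i₀ : ι} {w w' : (V → ι) → ℂ} {c c' : ℝ}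

lemma WeightBound.norm_sum_le (h : WeightBound T i₀ w c) : ‖∑ φ ∈ pinned T i₀, w φ‖ ≤ c := by
  simpa using h (fun _ _ => 1) (by simp)

lemma weightBound_empty (i₀ : ι) : WeightBound (∅ : Finset V) i₀ (fun _ => 1) 1 := by
  intro x hx
  have hpinned : pinned (∅ : Finset V) i₀ = {fun _ => i₀} := by
    ext φ
    simp [mem_pinned, funext_iff]
  rw [hpinned, Finset.sum_singleton, one_mul, norm_prod]
  exact Finset.prod_le_one (fun _ _ => norm_nonneg _) fun v _ => hx v _

lemma WeightBound.mono (h : WeightBound T i₀ w c) (hc : c ≤ c') : WeightBound T i₀ w c' :=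
  fun x hx => (h x hx).trans hc

lemma WeightBound.sub (h : WeightBound T i₀ w c) (h' : WeightBound T i₀ w' c') :
    WeightBound T i₀ (fun φ => w φ - w' φ) (c + c') := by
  intro x hx
  simp only [sub_mul, Finset.sum_sub_distrib]
  exact (norm_sub_le _ _).trans (add_le_add (h x hx) (h' x hx))

lemma WeightBound.mul_apply_mul_apply (h : WeightBound T i₀ w c) (a b : V) {u s : ι → ℂ}
    (hu : ∀ i, ‖u i‖ ≤ 1) (hs : ∀ i, ‖s i‖ ≤ 1) :
    WeightBound T i₀ (fun φ => w φ * (u (φ a) * s (φ b))) c := by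
  intro x hx
  convert h (fun v i => x v i * (if v = a then u i else 1) * (if v = b then s i else 1)) ?_ using 2
  · refine Finset.sum_congr rfl fun φ _ => ?_
    simp only [Finset.prod_mul_distrib, Finset.prod_ite_eq', Finset.mem_univ, if_true]
    ring
  · intro v i
    simp only [norm_mul]
    refine mul_le_one₀ (mul_le_one₀ (hx v i) (norm_nonneg _) ?_) (norm_nonneg _) ?_ <;>
      split_ifs <;> simp [hu, hs]

lemma sum_pinned_insert {z : V} (hz : z ∉ T) (f : (V → ι) → ℂ) :
    ∑ φ ∈ pinned (insert z T) i₀, f φ =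
      ∑ φ ∈ pinned T i₀, ∑ y, f (Function.update φ z y) := by
  rw [← Finset.sum_product']
  refine Finset.sum_nbij' (fun φ => (Function.update φ z i₀, φ z))
    (fun p => Function.update p.1 z p.2) ?_ ?_ ?_ ?_ ?_
  · intro φ hφ
    simp only [Finset.mem_product, mem_pinned, Finset.mem_univ, and_true] at hφ ⊢
    intro v hv
    rcases eq_or_ne v z with rfl | hvz
    · simp
    · simpa [hvz] using hφ v (by simp [hvz, hv])
  · intro p hp
    simp only [Finset.mem_product, mem_pinned, Finset.mem_univ, and_true] at hp ⊢
    intro v hv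
    simp only [Finset.mem_insert, not_or] at hv
    simpa [hv.1] using hp v hv.2
  · intro φ _
    simp
  · rintro ⟨φ, y⟩ hp
    simp only [Finset.mem_product, mem_pinned, Finset.mem_univ, and_true] at hp
    simp [← hp z hz]
  · intro φ _
    simp

variable [DecidableEq ι]

lemma WeightBound.mul_entry (h : WeightBound T i₀ w c) (a b : V) {B : Matrix ι ι ℂ}
    (hB : ‖B‖ ≤ 1) : WeightBound T i₀ (fun φ => w φ * B (φ a) (φ b)) (4 * c) := by
  obtain ⟨u, s, hu, hs, hBu⟩ := exists_average_of_rows (B := B) fun i =>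
    (sum_sq_row_le B i).trans (pow_le_one₀ (norm_nonneg B) hB)
  intro x hx
  have haverage : ∑ φ ∈ pinned T i₀, w φ * B (φ a) (φ b) * ∏ v, x v (φ v) =
      4 / 2 ^ Fintype.card ι *
        ∑ r, ∑ φ ∈ pinned T i₀, w φ * (u r (φ a) * s r (φ b)) * ∏ v, x v (φ v) := by
    rw [Finset.sum_comm, Finset.mul_sum]
    refine Finset.sum_congr rfl fun φ _ => ?_
    rw [hBu, ← Finset.sum_mul, ← Finset.mul_sum]
    ring
  calc _ = 4 / 2 ^ Fintype.card ι *
        ‖∑ r, ∑ φ ∈ pinned T i₀, w φ * (u r (φ a) * s r (φ b)) * ∏ v, x v (φ v)‖ := by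
        rw [haverage, norm_mul]
        simp
    _ ≤ 4 / 2 ^ Fintype.card ι * ∑ _r : ι → Bool, c := by
        gcongr
        exact norm_sum_le_of_le _ fun r _ => h.mul_apply_mul_apply a b (hu r) (hs r) x hx
    _ = 4 * c := by
        simp only [Finset.sum_const, Finset.card_univ, Fintype.card_pi, Fintype.card_bool,
          Finset.prod_const, nsmul_eq_mul, Nat.cast_pow, Nat.cast_ofNat]
        field_simp

lemma WeightBound.subdivide {z s z' : V} (hz' : z' ∉ T) (hz : z ≠ z') (hs : s ≠ z')
    (hw : ∀ φ y, w (Function.update φ z' y) = w φ)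
    (h : ∀ M : Matrix ι ι ℂ, ‖M‖ ≤ 1 → WeightBound T i₀ (fun φ => w φ * M (φ z) (φ s)) c)
    {B M : Matrix ι ι ℂ} (hB : ‖B‖ ≤ 1) (hM : ‖M‖ ≤ 1) :
    WeightBound (insert z' T) i₀ (fun φ => w φ * B (φ z) (φ z') * M (φ z') (φ s)) c := by
  intro x hx
  have hcontraction : ‖B * Matrix.diagonal (x z') * M‖ ≤ 1 :=
    (norm_mul_le _ _).trans <| mul_le_one₀ ((norm_mul_le _ _).trans <|
      mul_le_one₀ hB (norm_nonneg _) (l2_opNorm_diagonal_le_one (hx z'))) (norm_nonneg _) hM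
  convert h _ hcontraction (Function.update x z' fun _ => 1) ?_ using 2
  · rw [sum_pinned_insert hz']
    refine Finset.sum_congr rfl fun φ _ => ?_
    have hprod : ∀ y, ∏ v, x v (Function.update φ z' y v) =
        x z' y * ∏ v, Function.update x z' (fun _ => 1) v (φ v) := by
      intro y
      rw [← Finset.mul_prod_erase _ _ (Finset.mem_univ z'),
        ← Finset.mul_prod_erase _ (fun v => Function.update x z' (fun _ => 1) v (φ v))
          (Finset.mem_univ z')]
      simp only [Function.update_self, one_mul]
      congr 1
      refine Finset.prod_congr rfl fun v hv => ?_
      simp [Finset.ne_of_mem_erase hv]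
    simp only [hw, hprod, Function.update_self, Function.update_of_ne hz,
      Function.update_of_ne hs, Matrix.mul_apply (N := M), Matrix.mul_diagonal]
    rw [Finset.mul_sum, Finset.sum_mul]
    exact Finset.sum_congr rfl fun y _ => by ring
  · intro v i
    rcases eq_or_ne v z' with rfl | hv
    · simp
    · simpa [hv] using hx v i

lemma WeightBound.mul_prod_ne (h : WeightBound T i₀ w c) (P : Finset (V × V)) :
    WeightBound T i₀
      (fun φ => w φ * ∏ p ∈ P, (1 - (1 : Matrix ι ι ℂ) (φ p.1) (φ p.2))) (5 ^ P.card * c) := by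
  induction P using Finset.induction_on with
  | empty => simpa using h
  | insert p P hp ih =>
    convert ih.sub (ih.mul_entry p.1 p.2 l2_opNorm_one_le) using 1
    · funext φ
      rw [Finset.prod_insert hp]
      ring
    · rw [Finset.card_insert_of_notMem hp]
      ring

end PinnedSums

section Bridgeless

open scoped Matrix.Norms.L2Operator

variable {V E : Type} {ι : Type*} (src tgt : E → V) (B : E → Matrix ι ι ℂ)

/-- The weight of a labelling restricted to a set of edges. -/
def edgeWeight (F : Finset E) (φ : V → ι) : ℂ :=
  ∏ e ∈ F, B e (φ (tgt e)) (φ (src e))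

variable {src tgt B}

lemma edgeWeight_insert {F : Finset E} {f : E} (hf : f ∉ F) (φ : V → ι) :
    edgeWeight src tgt B (insert f F) φ =
      edgeWeight src tgt B F φ * B f (φ (tgt f)) (φ (src f)) := by
  rw [edgeWeight, Finset.prod_insert hf, mul_comm, edgeWeight]

lemma edgeWeight_update {F : Finset E} {z : V} (hF : ∀ e ∈ F, src e ≠ z ∧ tgt e ≠ z)
    (φ : V → ι) (y : ι) :
    edgeWeight src tgt B F (Function.update φ z y) = edgeWeight src tgt B F φ :=
  Finset.prod_congr rfl fun e he => by
    rw [Function.update_of_ne (hF e he).1, Function.update_of_ne (hF e he).2]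

lemma Joins.symm {e : E} {a b : V} (h : Joins src tgt e a b) : Joins src tgt e b a := Or.symm h

lemma notMem_of_joins {U : Finset V} {F : Finset E} {f : E} {z z' : V}
    (hF : ∀ f ∈ F, src f ∈ U ∧ tgt f ∈ U) (hf : Joins src tgt f z z')
    (hz' : z' ∉ U) : f ∉ F := by
  intro hfF
  rcases hf with ⟨_, rfl⟩ | ⟨rfl, _⟩
  · exact hz' (hF f hfF).2
  · exact hz' (hF f hfF).1

lemma ends_mem_insert {U U' : Finset V} {F : Finset E} {f : E} {z z' : V}
    (hF : ∀ f ∈ F, src f ∈ U ∧ tgt f ∈ U) (hUU' : U ⊆ U')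
    (hf : Joins src tgt f z z') (hz : z ∈ U') (hz' : z' ∈ U') :
    ∀ f' ∈ insert f F, src f' ∈ U' ∧ tgt f' ∈ U' := by
  intro f' hf'
  rcases Finset.mem_insert.mp hf' with rfl | hf'
  · rcases hf with ⟨rfl, rfl⟩ | ⟨rfl, rfl⟩ <;> exact ⟨‹_›, ‹_›⟩
  · exact (hF f' hf').imp (hUU' ·) (hUU' ·)

lemma Joins.exists_entry_eq [Fintype ι] [DecidableEq ι] {e : E} {a b : V}
    (h : Joins src tgt e a b) (hB : ‖B e‖ ≤ 1) :
    ∃ M : Matrix ι ι ℂ, ‖M‖ ≤ 1 ∧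
      ∀ φ : V → ι, B e (φ (tgt e)) (φ (src e)) = M (φ a) (φ b) := by
  rcases h with ⟨rfl, rfl⟩ | ⟨rfl, rfl⟩
  · exact ⟨(B e)ᵀ, (l2_opNorm_transpose_le _).trans hB, fun _ => rfl⟩
  · exact ⟨B e, hB, fun _ => rfl⟩

variable [Fintype V] [Fintype ι]

variable (src tgt B)

/-- A subgraph with vertices `U` and edges `F`, containing the root `r`, whose weight has a bound
exponential in the number of edges when the label of the root is pinned to `i₀`. -/
structure BoundedSubgraph (i₀ : ι) (r : V) (U : Finset V) (F : Finset E) : Prop where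
  root_mem : r ∈ U
  ends_mem : ∀ f ∈ F, src f ∈ U ∧ tgt f ∈ U
  weightBound : WeightBound (U.erase r) i₀ (edgeWeight src tgt B F) (4 ^ F.card)

variable {src tgt B}

lemma boundedSubgraph_singleton (i₀ : ι) (r : V) : BoundedSubgraph src tgt B i₀ r {r} ∅ where
  root_mem := Finset.mem_singleton_self r
  ends_mem := by simp
  weightBound := by
    rw [Finset.erase_singleton]
    exact (weightBound_empty i₀).mono (by simp)

variable [DecidableEq ι]

lemma WeightBound.edgeWeight_union {T : Finset V} {i₀ : ι} {F : Finset E}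
    (hB : ∀ e, ‖B e‖ ≤ 1) (h : WeightBound T i₀ (edgeWeight src tgt B F) (4 ^ F.card))
    (D : Finset E) :
    WeightBound T i₀ (edgeWeight src tgt B (D ∪ F)) (4 ^ (D ∪ F).card) := by
  induction D using Finset.induction_on with
  | empty => simpa using h
  | insert f D _ ih =>
    rw [Finset.insert_union]
    by_cases hf : f ∈ D ∪ F
    · rwa [Finset.insert_eq_of_mem hf]
    · convert ih.mul_entry (tgt f) (src f) (hB f) using 1
      · exact funext fun φ => edgeWeight_insert hf φ
      · rw [Finset.card_insert_of_notMem hf]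
        ring

variable (src tgt B)

/-- A subgraph with vertices `U` and edges `F`, containing the root `r`, whose weight becomes
bounded once a virtual edge from `z` to `s`, carrying any contraction, is added. It describes a
partially constructed ear, started at `s`, that has reached `z` without using the edge `e`, which
is kept to close the ear. -/
structure PartialEar (i₀ : ι) (r s : V) (e : E) (U : Finset V) (F : Finset E) (z : V) : Prop where
  root_mem : r ∈ U
  start_mem : s ∈ U
  end_mem : z ∈ U
  ends_mem : ∀ f ∈ F, src f ∈ U ∧ tgt f ∈ U
  edge_notMem : e ∉ F
  weightBound : ∀ M : Matrix ι ι ℂ, ‖M‖ ≤ 1 →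
    WeightBound (U.erase r) i₀ (fun φ => edgeWeight src tgt B F φ * M (φ z) (φ s))
      (4 ^ (F.card + 1))

variable {src tgt B} {i₀ : ι} {r s z z' : V} {e f : E} {U : Finset V} {F : Finset E}

lemma BoundedSubgraph.partialEar (h : BoundedSubgraph src tgt B i₀ r U F) (he : e ∉ F)
    (hs : s ∈ U) (hz : z ∈ U) : PartialEar src tgt B i₀ r s e U F z where
  root_mem := h.root_mem
  start_mem := hs
  end_mem := hz
  ends_mem := h.ends_mem
  edge_notMem := he
  weightBound M hM := by
    convert h.weightBound.mul_entry z s hM using 1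
    ring

lemma PartialEar.extend (h : PartialEar src tgt B i₀ r s e U F z) (hz' : z' ∉ U) (hfe : f ≠ e)
    (hf : Joins src tgt f z z') (hB : ‖B f‖ ≤ 1) :
    PartialEar src tgt B i₀ r s e (insert z' U) (insert f F) z' := by
  have hfF : f ∉ F := notMem_of_joins h.ends_mem hf hz'
  have ne_of_mem : ∀ {v}, v ∈ U → v ≠ z' := fun hv hvz => hz' (hvz ▸ hv)
  obtain ⟨M', hM', hBM'⟩ := hf.exists_entry_eq hB
  refine ⟨Finset.mem_insert_of_mem h.root_mem, Finset.mem_insert_of_mem h.start_mem,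
    Finset.mem_insert_self _ _, ends_mem_insert h.ends_mem (Finset.subset_insert _ _) hf
      (Finset.mem_insert_of_mem h.end_mem) (Finset.mem_insert_self _ _),
    by simp [hfe.symm, h.edge_notMem], fun M hM => ?_⟩
  have hbound := WeightBound.subdivide (mt Finset.mem_of_mem_erase hz') (ne_of_mem h.end_mem)
    (ne_of_mem h.start_mem) (edgeWeight_update fun f' hf' => (h.ends_mem f' hf').imp
      ne_of_mem ne_of_mem) h.weightBound hM' hM
  rw [Finset.erase_insert_of_ne (ne_of_mem h.root_mem).symm]
  convert hbound.mono (pow_le_pow_right₀ (by norm_num)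
    (Nat.succ_le_succ (Finset.card_le_card (Finset.subset_insert f F)))) using 1
  funext φ
  rw [edgeWeight_insert hfF, hBM']

lemma PartialEar.close (h : PartialEar src tgt B i₀ r s e U F z) (he : Joins src tgt e s z)
    (hB : ‖B e‖ ≤ 1) : BoundedSubgraph src tgt B i₀ r U (insert e F) where
  root_mem := h.root_mem
  ends_mem := ends_mem_insert h.ends_mem subset_rfl he h.start_mem h.end_mem
  weightBound := by
    obtain ⟨M, hM, hBM⟩ := he.symm.exists_entry_eq hB
    rw [Finset.card_insert_of_notMem h.edge_notMem]
    convert h.weightBound M hM using 1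
    funext φ
    rw [edgeWeight_insert h.edge_notMem, hBM]

lemma BoundedSubgraph.exists_partialEar (hB : ∀ e, ‖B e‖ ≤ 1)
    (h : BoundedSubgraph src tgt B i₀ r U F) (he : e ∉ F) (hs : s ∈ U)
    (hz : reachOn src tgt {e} s z) :
    ∃ U' F', U ⊆ U' ∧ PartialEar src tgt B i₀ r s e U' F' z := by
  -- The walk to `z` may meet itself, so an ear is kept for every vertex of a set `W` containing the
  -- part of the walk already explored.
  suffices H : ∃ W : Finset V, z ∈ W ∧
      ∀ v ∈ W, ∃ U' F', U ⊆ U' ∧ PartialEar src tgt B i₀ r s e U' F' v ∧ U' ⊆ W by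
    obtain ⟨W, hzW, hW⟩ := H
    obtain ⟨U', F', hU', hear, _⟩ := hW z hzW
    exact ⟨U', F', hU', hear⟩
  induction hz with
  | refl => exact ⟨U, hs, fun v hv => ⟨U, F, subset_rfl, h.partialEar he hs hv, subset_rfl⟩⟩
  | @tail z z' _ hstep ih =>
    obtain ⟨W, hzW, hW⟩ := ih
    by_cases hz'W : z' ∈ W
    · exact ⟨W, hz'W, hW⟩
    obtain ⟨f, hfe, hf⟩ := hstep
    obtain ⟨U₁, F₁, hU₁, hear, hU₁W⟩ := hW z hzW
    refine ⟨insert z' W, Finset.mem_insert_self _ _, fun v hv => ?_⟩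
    rcases Finset.mem_insert.mp hv with rfl | hv
    · exact ⟨_, _, hU₁.trans (Finset.subset_insert _ _),
        hear.extend (fun hmem => hz'W (hU₁W hmem)) hfe hf (hB f),
        Finset.insert_subset_insert _ hU₁W⟩
    · obtain ⟨U₂, F₂, hU₂, hear₂, hU₂W⟩ := hW v hv
      exact ⟨U₂, F₂, hU₂, hear₂, hU₂W.trans (Finset.subset_insert _ _)⟩

lemma BoundedSubgraph.exists_ssubset (hB : ∀ e, ‖B e‖ ≤ 1)
    (hconn : ∀ v, reachOn src tgt ∅ r v) (hbridge : ∀ e, ¬ IsCutEdge src tgt e)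
    (h : BoundedSubgraph src tgt B i₀ r U F) (hU : U ≠ Finset.univ) :
    ∃ U' F', U ⊂ U' ∧ BoundedSubgraph src tgt B i₀ r U' F' := by
  obtain ⟨v, hv⟩ : ∃ v, v ∉ U := by simpa [Finset.eq_univ_iff_forall] using hU
  obtain ⟨e, -, s, hs, z, hz, he, -⟩ := exists_last_exit (U := (U : Set V)) (hconn v)
    (Finset.mem_coe.mpr h.root_mem) (by simpa using hv)
  have hz : z ∉ U := by simpa using hz
  obtain ⟨U', F', hUU', hear⟩ := h.exists_partialEar hB (notMem_of_joins h.ends_mem he hz)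
    (Finset.mem_coe.mp hs) (he.reachOn_iff.mpr (not_not.mp (hbridge e)))
  exact ⟨U', insert e F', Finset.ssubset_iff_of_subset hUU' |>.mpr ⟨z, hear.end_mem, hz⟩,
    hear.close he (hB e)⟩

theorem weightBound_of_bridgeless [Fintype E] (hB : ∀ e, ‖B e‖ ≤ 1) (i₀ : ι) (r : V)
    (hconn : ∀ v, reachOn src tgt ∅ r v) (hbridge : ∀ e, ¬ IsCutEdge src tgt e) :
    WeightBound (Finset.univ.erase r) i₀ (edgeWeight src tgt B Finset.univ)
      (4 ^ Fintype.card E) := by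
  obtain ⟨U, ⟨F, hF⟩, hmax⟩ := (Set.toFinite
    {U | ∃ F, BoundedSubgraph src tgt B i₀ r U F}).exists_maximal
    ⟨_, ∅, boundedSubgraph_singleton i₀ r⟩
  have hU : U = Finset.univ := by
    by_contra hU
    obtain ⟨U', F', hUU', hF'⟩ := hF.exists_ssubset hB hconn hbridge hU
    exact hUU'.2 (hmax ⟨F', hF'⟩ hUU'.1)
  have hbound := hF.weightBound.edgeWeight_union hB Finset.univ
  rwa [Finset.union_eq_left.mpr (Finset.subset_univ _), Finset.card_univ, hU] at hbound

end Bridgeless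

/-! ### The graph of coloured components -/

lemma two_mul_ncard_image_le {α β : Type*} [Finite α] {S : Set α} {f : α → β}
    (h : ∀ p ∈ S, ∃ q ∈ S, q ≠ p ∧ f q = f p) : 2 * (f '' S).ncard ≤ S.ncard := by
  obtain ⟨T, hTS, hT⟩ := Set.exists_subset_bijOn S f
  have hsub : f '' S ⊆ f '' (S \ T) := by
    rw [← hT.image_eq]
    rintro _ ⟨t, ht, rfl⟩
    obtain ⟨q, hq, hqt, hfq⟩ := h t (hTS ht)
    exact ⟨q, ⟨hq, fun hqT => hqt (hT.injOn hqT ht hfq)⟩, hfq⟩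
  have hdiff := (Set.ncard_le_ncard hsub).trans (Set.ncard_image_le (S \ T).toFinite)
  have hTcard : (f '' S).ncard = T.ncard := by rw [← hT.image_eq, hT.injOn.ncard_image]
  have := Set.ncard_sdiff_add_ncard_of_subset hTS
  omega

lemma ncard_isolated_le {V E : Type} [Finite V] [Finite E] {src tgt : E → V}
    (hconn : IsConnectedGraph src tgt) {D : Set E} {e₀ : E} (he₀ : e₀ ∉ D) :
    {x | ∀ e ∉ D, src e ≠ x ∧ tgt e ≠ x}.ncard ≤ D.ncard := by
  set I := {x | ∀ e ∉ D, src e ≠ x ∧ tgt e ≠ x}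
  have hiso : ∀ x ∈ I, ∀ y, reachOn src tgt D x y → x = y := by
    intro x hx y h
    rcases h.cases_head with rfl | ⟨z, ⟨e, he, ⟨rfl, -⟩ | ⟨-, rfl⟩⟩, -⟩
    · rfl
    · exact absurd rfl (hx e he).1
    · exact absurd rfl (hx e he).2
  have hinj : Set.InjOn (Quotient.mk (connSetoid src tgt D)) (insert (src e₀) I) := by
    rintro x hx y hy hxy
    have hxy : reachOn src tgt D x y := Quotient.exact hxy
    rcases hx with rfl | hx
    · rcases hy with rfl | hy
      · rfl
      · exact (hiso y hy _ (reachOn_symm hxy)).symm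
    · exact hiso x hx y hxy
  have hcard : (insert (src e₀) I).ncard ≤ ncompAvoiding src tgt D := by
    rw [← hinj.ncard_image]
    exact Set.ncard_le_card _
  rw [Set.ncard_insert_of_notMem fun h => (h e₀ he₀).1 rfl] at hcard
  have := ncompAvoiding_le_ncard_add_one hconn D
  omega

section ComponentGraph

variable {W E κ : Type} (src tgt : E → W) (col : E → κ)

/-- The connected components of the subgraph formed by the edges of colour `ℓ`. -/
abbrev ColorComp (ℓ : κ) : Type := Quotient (connSetoid src tgt {e | col e ≠ ℓ})

/-- The component of colour `ℓ` containing a vertex. -/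
def colorComp (ℓ : κ) (w : W) : ColorComp src tgt col ℓ := Quotient.mk _ w

/-- The nodes of the component graph: the bipartite graph joining each vertex to its component
of each colour. -/
abbrev CompNode : Type := W ⊕ (Σ ℓ, ColorComp src tgt col ℓ)

/-- The vertex end of an edge of the component graph. Its edges are the pairs of a vertex and a
colour. -/
def compSrc (p : W × κ) : CompNode src tgt col := Sum.inl p.1

/-- The component end of an edge of the component graph. -/
def compTgt (p : W × κ) : CompNode src tgt col := Sum.inr ⟨p.2, colorComp src tgt col p.2 p.1⟩

/-- An edge of the component graph is live if it lies on a cycle. -/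
def IsLive (p : W × κ) : Prop := ¬ IsCutEdge (compSrc src tgt col) (compTgt src tgt col) p

/-- A coloured component is dead if it lies on no cycle of the component graph. -/
def IsDead (ℓ : κ) (C : ColorComp src tgt col ℓ) : Prop :=
  ∀ w, IsLive src tgt col (w, ℓ) → colorComp src tgt col ℓ w ≠ C

variable {src tgt col} {a b : W} {ℓ m : κ}

lemma colorComp_eq_iff : colorComp src tgt col ℓ a = colorComp src tgt col ℓ b ↔
    reachOn src tgt {e | col e ≠ ℓ} a b :=
  ⟨fun h => Quotient.exact h, fun h => Quotient.sound h⟩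

lemma colorComp_src_eq_tgt (e : E) :
    colorComp src tgt col (col e) (src e) = colorComp src tgt col (col e) (tgt e) :=
  colorComp_eq_iff.mpr (reachOn_of_edge (by simp))

lemma compTgt_eq (h : colorComp src tgt col ℓ a = colorComp src tgt col ℓ b) :
    compTgt src tgt col (a, ℓ) = compTgt src tgt col (b, ℓ) := by simp [compTgt, h]

lemma eq_and_colorComp_eq (h : compTgt src tgt col (a, m) = compTgt src tgt col (b, ℓ)) :
    m = ℓ ∧ colorComp src tgt col ℓ a = colorComp src tgt col ℓ b := by
  obtain ⟨rfl, h⟩ := Sigma.mk.inj_iff.mp (Sum.inr.inj h)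
  exact ⟨rfl, eq_of_heq h⟩

variable {S : Set (W × κ)}

lemma reachOn_compTgt (h : (a, ℓ) ∉ S) :
    reachOn (compSrc src tgt col) (compTgt src tgt col) S (Sum.inl a)
      (compTgt src tgt col (a, ℓ)) :=
  reachOn_of_edge (src := compSrc src tgt col) h

lemma reachOn_comp_of_colorComp_eq (h : colorComp src tgt col ℓ a = colorComp src tgt col ℓ b)
    (ha : (a, ℓ) ∉ S) (hb : (b, ℓ) ∉ S) :
    reachOn (compSrc src tgt col) (compTgt src tgt col) S (Sum.inl a) (Sum.inl b) :=
  (reachOn_compTgt ha).trans (compTgt_eq h ▸ reachOn_symm (reachOn_compTgt hb))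

lemma reachOn_comp_of_reachOn {F : Set E}
    (hS : ∀ e ∉ F, (src e, col e) ∉ S ∧ (tgt e, col e) ∉ S) (h : reachOn src tgt F a b) :
    reachOn (compSrc src tgt col) (compTgt src tgt col) S (Sum.inl a) (Sum.inl b) :=
  reachOn_lift Sum.inl (fun e he =>
    reachOn_comp_of_colorComp_eq (colorComp_src_eq_tgt e) (hS e he).1 (hS e he).2) h

lemma isConnectedGraph_comp (hconn : IsConnectedGraph src tgt) :
    IsConnectedGraph (compSrc src tgt col) (compTgt src tgt col) := by
  have exists_inl : ∀ x : CompNode src tgt col, ∃ a : W,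
      reachOn (compSrc src tgt col) (compTgt src tgt col) ∅ x (Sum.inl a) := by
    rintro (a | ⟨ℓ, ⟨a⟩⟩)
    · exact ⟨a, .refl⟩
    · exact ⟨a, reachOn_symm (reachOn_compTgt (Set.notMem_empty _))⟩
  intro x y
  obtain ⟨a, ha⟩ := exists_inl x
  obtain ⟨b, hb⟩ := exists_inl y
  exact (ha.trans (reachOn_comp_of_reachOn (by simp) (hconn a b))).trans (reachOn_symm hb)

lemma IsLive.exists_color_ne [Finite W] [Finite κ] (h : IsLive src tgt col (a, ℓ)) :
    ∃ m, m ≠ ℓ ∧ IsLive src tgt col (a, m) := by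
  rcases (reachOn_insert_cutEdges h).cases_head with h0 | ⟨_, ⟨⟨w, m⟩, hp, ⟨hw, -⟩ | ⟨-, hw⟩⟩, -⟩
  · exact absurd h0 Sum.inl_ne_inr
  · obtain rfl : w = a := Sum.inl.inj hw
    simp only [Set.mem_insert_iff, not_or, Prod.mk.injEq, true_and] at hp
    exact ⟨m, hp⟩
  · exact absurd hw Sum.inr_ne_inl

lemma IsLive.exists_vertex_ne [Finite W] [Finite κ] (h : IsLive src tgt col (a, ℓ)) :
    ∃ w, w ≠ a ∧ colorComp src tgt col ℓ w = colorComp src tgt col ℓ a ∧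
      IsLive src tgt col (w, ℓ) := by
  rcases (reachOn_insert_cutEdges h).cases_tail with h0 | ⟨_, -, ⟨⟨w, m⟩, hp, ⟨-, hw⟩ | ⟨hw, -⟩⟩⟩
  · exact absurd h0 Sum.inr_ne_inl
  · obtain ⟨rfl, hw⟩ := eq_and_colorComp_eq hw
    simp only [Set.mem_insert_iff, not_or, Prod.mk.injEq, and_true] at hp
    exact ⟨w, hp.1, hw, hp.2⟩
  · exact absurd hw Sum.inl_ne_inr

lemma exists_isLive_of_not_reachOn {e : E}
    (hcol : colorComp src tgt col ℓ a = colorComp src tgt col ℓ b) (h : reachOn src tgt {e} a b)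
    (hab : ¬ reachOn src tgt (insert e {e | col e ≠ ℓ}) a b) :
    ∃ w, reachOn src tgt (insert e {e | col e ≠ ℓ}) a w ∧ IsLive src tgt col (w, ℓ) := by
  set U := {w | reachOn src tgt (insert e {e | col e ≠ ℓ}) a w}
  obtain ⟨f, hf, x, hx, y, hy, hfxy, hyb⟩ := exists_last_exit (U := U) h .refl hab
  have hne : ∀ v ∉ U, v ≠ x := fun v hv hvx => hv (hvx ▸ hx)
  have hfcol : col f ≠ ℓ := by
    intro hfℓ
    exact hy (hx.tail ⟨f, by simpa [hfℓ] using hf, hfxy⟩)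
  have hxa : colorComp src tgt col ℓ x = colorComp src tgt col ℓ b :=
    (colorComp_eq_iff.mpr (reachOn_mono (Set.subset_insert _ _) (reachOn_symm hx))).trans hcol
  have hxy : colorComp src tgt col (col f) x = colorComp src tgt col (col f) y :=
    colorComp_eq_iff.mpr (.single ⟨f, by simp, hfxy⟩)
  -- The last exit from `U`, followed back to `b`, closes the edge `(x, ℓ)` up to a cycle.
  have hcycle : reachOn (compSrc src tgt col) (compTgt src tgt col) {(x, ℓ)} (Sum.inl x)
      (Sum.inl b) := by
    refine (reachOn_comp_of_colorComp_eq hxy ?_ ?_).trans (reachOn_comp_of_reachOn ?_ hyb)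
    · simpa using hfcol
    · simp [hne y hy]
    · intro g hg
      simp only [Set.mem_ofPred_eq, not_or] at hg
      simp [hne _ hg.1, hne _ hg.2]
  refine ⟨x, hx, not_not.mpr (hcycle.trans ?_)⟩
  rw [compTgt_eq hxa]
  exact reachOn_compTgt (by simp [hne b hab])

variable (src tgt col)

/-- Attachments of the subgraph of colour `ℓ` to an additional hub: one for each live edge and
two for each dead component, the fewest that leave no bridge. -/
abbrev HubEdge (ℓ : κ) : Type :=
  {w : W // IsLive src tgt col (w, ℓ)} ⊕
    ({C : ColorComp src tgt col ℓ // IsDead src tgt col ℓ C} × Bool)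

variable {src tgt col}

lemma sum_card_hubEdge [Fintype W] [Fintype κ] :
    ∑ ℓ, Fintype.card (HubEdge src tgt col ℓ) = {p | IsLive src tgt col p}.ncard +
      2 * {C : Σ ℓ, ColorComp src tgt col ℓ | IsDead src tgt col C.1 C.2}.ncard := by
  have hlive : {p | IsLive src tgt col p}.ncard =
      ∑ ℓ, Fintype.card {w : W // IsLive src tgt col (w, ℓ)} := by
    rw [← Fintype.card_sigma, ← Nat.card_coe_set_eq, ← Nat.card_eq_fintype_card]
    exact Nat.card_congr ⟨fun p => ⟨p.1.2, p.1.1, p.2⟩, fun q => ⟨(q.2.1, q.1), q.2.2⟩,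
      fun _ => rfl, fun _ => rfl⟩
  have hdead : {C : Σ ℓ, ColorComp src tgt col ℓ | IsDead src tgt col C.1 C.2}.ncard =
      ∑ ℓ, Fintype.card {C : ColorComp src tgt col ℓ // IsDead src tgt col ℓ C} := by
    rw [← Fintype.card_sigma, ← Nat.card_coe_set_eq, ← Nat.card_eq_fintype_card]
    exact Nat.card_congr ⟨fun C => ⟨C.1.1, C.1.2, C.2⟩, fun C => ⟨⟨C.1, C.2.1⟩, C.2.2⟩,
      fun _ => rfl, fun _ => rfl⟩
  rw [hlive, hdead, Finset.mul_sum, ← Finset.sum_add_distrib]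
  simp only [Fintype.card_sum, Fintype.card_prod, Fintype.card_bool, mul_comm]

lemma ncard_isolated_comp [Finite W] [Finite κ] :
    {x | ∀ p ∉ cutEdges (compSrc src tgt col) (compTgt src tgt col),
        compSrc src tgt col p ≠ x ∧ compTgt src tgt col p ≠ x}.ncard =
      (Prod.fst '' {p | IsLive src tgt col p})ᶜ.ncard +
        {C : Σ ℓ, ColorComp src tgt col ℓ | IsDead src tgt col C.1 C.2}.ncard := by
  rw [← Nat.card_coe_set_eq, ← Nat.card_coe_set_eq, ← Nat.card_coe_set_eq, ← Nat.card_sum]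
  refine Nat.card_congr (Equiv.subtypeSum.trans (Equiv.sumCongr ?_ ?_))
  · refine Equiv.subtypeEquivRight fun w => ?_
    simp only [cutEdges, Set.mem_ofPred_eq, compSrc, compTgt, ne_eq, Sum.inl.injEq, reduceCtorEq,
      not_false_eq_true, and_true, Set.mem_compl_iff, Set.mem_image, IsLive, not_exists, not_and]
  · refine Equiv.subtypeEquivRight ?_
    rintro ⟨ℓ, C⟩
    simp only [compSrc, compTgt, ne_eq, reduceCtorEq, not_false_eq_true, true_and, Sum.inr.injEq,
      Set.mem_ofPred_eq, IsDead, Prod.forall]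
    refine ⟨fun h w hw hC => h w ℓ hw (by rw [hC]), ?_⟩
    rintro h w m hw hC
    obtain ⟨rfl, hC⟩ := Sigma.mk.inj_iff.mp hC
    exact h w hw (eq_of_heq hC)

lemma sum_card_hubEdge_add_le [Fintype W] [Fintype κ] (hconn : IsConnectedGraph src tgt)
    {p : W × κ} (hp : IsLive src tgt col p) :
    ∑ ℓ, Fintype.card (HubEdge src tgt col ℓ) + 2 * Fintype.card W ≤
      2 * (Fintype.card κ * Fintype.card W) := by
  have hisolated := ncard_isolated_le (isConnectedGraph_comp (col := col) hconn)
    (D := cutEdges (compSrc src tgt col) (compTgt src tgt col)) hp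
  rw [ncard_isolated_comp] at hisolated
  rw [sum_card_hubEdge]
  set live := {p | IsLive src tgt col p} with hlive
  have hcut : cutEdges (compSrc src tgt col) (compTgt src tgt col) = liveᶜ := by
    ext q
    simp [hlive, IsLive, cutEdges]
  rw [hcut] at hisolated
  have htwo : 2 * (Prod.fst '' live).ncard ≤ live.ncard := by
    refine two_mul_ncard_image_le ?_
    rintro ⟨w, ℓ⟩ h
    obtain ⟨m, hm, hm'⟩ := IsLive.exists_color_ne h
    exact ⟨(w, m), hm', by simp [hm], rfl⟩
  have hvertices := Set.ncard_add_ncard_compl (Prod.fst '' live)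
  have hedges := Set.ncard_add_ncard_compl live
  rw [Nat.card_eq_fintype_card] at hvertices hedges
  rw [Fintype.card_prod, mul_comm] at hedges
  omega

variable (src tgt col)

/-- There is a walk from `a` to `b` without stationary step, whose successive steps stay in a
component of the prescribed colours. -/
def ColorChain : List κ → W → W → Prop
  | [], a, b => a = b
  | ℓ :: ls, a, b => ∃ c, a ≠ c ∧ colorComp src tgt col ℓ a = colorComp src tgt col ℓ c ∧
      ColorChain ls c b

variable {src tgt col}

lemma ColorChain.exists_isLive_of_reachOn {ls : List κ} (hls : (ℓ :: ls).IsChain (· ≠ ·))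
    (hreach : reachOn (compSrc src tgt col) (compTgt src tgt col) {(a, ℓ)} (Sum.inl b)
      (compTgt src tgt col (a, ℓ)))
    (hc : ColorChain src tgt col ls a b) : ∃ p, IsLive src tgt col p := by
  induction ls generalizing a ℓ with
  | nil =>
    subst hc
    exact ⟨_, not_not.mpr hreach⟩
  | cons m ls ih =>
    obtain ⟨c, hac, hcomp, hc⟩ := hc
    rw [List.isChain_cons_cons] at hls
    by_contra hdead
    have hcut : IsCutEdge (compSrc src tgt col) (compTgt src tgt col) (a, ℓ) :=
      not_not.mp (not_exists.mp hdead (a, ℓ))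
    refine hdead (ih hls.2 ?_ hc)
    -- As `(a, ℓ)` is a bridge, the walk from `b` to its component end cannot leave through the
    -- vertex end of `(c, m)`; it either avoids `(c, m)` or stops at its component end.
    rcases reachOn_insert_or (c, m) hreach with h | ⟨-, h⟩ | ⟨h, -⟩
    · have ha : (a, ℓ) ∉ ({(c, m)} : Set (W × κ)) := by simp [hac]
      refine (reachOn_mono (by simp) h).trans ((reachOn_symm (reachOn_compTgt ha)).trans ?_)
      rw [← compTgt_eq hcomp]
      exact reachOn_compTgt (by simp [hac])
    · refine absurd (.trans ?_ (reachOn_mono (by simp) h)) hcut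
      rw [← compTgt_eq hcomp]
      exact reachOn_compTgt (by simpa using hls.1.symm)
    · exact reachOn_mono (by simp) h

lemma ColorChain.exists_isLive {ls : List κ} (h : ColorChain src tgt col ls a a) (hne : ls ≠ [])
    (hls : ls.IsChain (· ≠ ·)) : ∃ p, IsLive src tgt col p := by
  obtain ⟨ℓ, ls, rfl⟩ := List.exists_cons_of_ne_nil hne
  obtain ⟨c, hac, hcomp, hc⟩ := h
  refine hc.exists_isLive_of_reachOn hls ?_
  rw [← compTgt_eq hcomp]
  exact reachOn_compTgt (by simp [hac])

end ComponentGraph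

/-! ### Attaching a hub to the subgraph of one colour -/

section Hub

variable {W E κ : Type} (src tgt : E → W) (col : E → κ) (ℓ : κ)

/-- Sources of the edges of the subgraph of colour `ℓ` attached to a hub, which is the additional
vertex `none`. -/
def hubSrc : {e : E // col e = ℓ} ⊕ HubEdge src tgt col ℓ → Option W
  | Sum.inl e => some (src e)
  | Sum.inr (Sum.inl w) => some w
  | Sum.inr (Sum.inr (C, _)) => some C.1.out

/-- Targets of the edges of the subgraph of colour `ℓ` attached to a hub. -/
def hubTgt : {e : E // col e = ℓ} ⊕ HubEdge src tgt col ℓ → Option W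
  | Sum.inl e => some (tgt e)
  | Sum.inr _ => none

variable {src tgt col ℓ} {a b : W}
  {G : Set ({e : E // col e = ℓ} ⊕ HubEdge src tgt col ℓ)}

lemma reachOn_hub_of_reachOn {F : Set E}
    (hG : ∀ e ∉ F, ∃ h : col e = ℓ, Sum.inl ⟨e, h⟩ ∉ G) (h : reachOn src tgt F a b) :
    reachOn (hubSrc src tgt col ℓ) (hubTgt src tgt col ℓ) G (some a) (some b) := by
  refine reachOn_lift some (fun e he => ?_) h
  obtain ⟨_, heG⟩ := hG e he
  exact reachOn_of_edge (src := hubSrc src tgt col ℓ) heG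

lemma reachOn_hub_of_colorComp_eq
    (hG : ∀ e, Sum.inl e ∉ G) (h : colorComp src tgt col ℓ a = colorComp src tgt col ℓ b) :
    reachOn (hubSrc src tgt col ℓ) (hubTgt src tgt col ℓ) G (some a) (some b) :=
  reachOn_hub_of_reachOn (fun _ he => ⟨not_not.mp he, hG _⟩) (colorComp_eq_iff.mp h)

lemma reachOn_hub_of_isLive (ha : IsLive src tgt col (a, ℓ))
    (hG : Sum.inr (Sum.inl ⟨a, ha⟩) ∉ G) :
    reachOn (hubSrc src tgt col ℓ) (hubTgt src tgt col ℓ) G (some a) none :=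
  reachOn_of_edge (src := hubSrc src tgt col ℓ) (tgt := hubTgt src tgt col ℓ) hG

variable (src tgt col ℓ) in
lemma reachOn_hub (v : Option W) :
    reachOn (hubSrc src tgt col ℓ) (hubTgt src tgt col ℓ) ∅ none v := by
  rcases v with _ | v
  · exact .refl
  refine reachOn_symm ?_
  by_cases hdead : IsDead src tgt col ℓ (colorComp src tgt col ℓ v)
  · have hv : colorComp src tgt col ℓ v =
        colorComp src tgt col ℓ (colorComp src tgt col ℓ v).out := (Quotient.out_eq _).symm
    exact (reachOn_hub_of_colorComp_eq (by simp) hv).trans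
      (reachOn_of_edge (src := hubSrc src tgt col ℓ) (tgt := hubTgt src tgt col ℓ)
        (e := Sum.inr (Sum.inr (⟨_, hdead⟩, true))) (Set.notMem_empty _))
  · simp only [IsDead, not_forall, not_not] at hdead
    obtain ⟨w, hlive, hw⟩ := hdead
    exact (reachOn_hub_of_colorComp_eq (by simp) hw.symm).trans
      (reachOn_hub_of_isLive hlive (by simp))

lemma not_isCutEdge_hub_inl {e : E} (he : col e = ℓ) (hbridge : ¬ IsCutEdge src tgt e) :
    ¬ IsCutEdge (hubSrc src tgt col ℓ) (hubTgt src tgt col ℓ) (Sum.inl ⟨e, he⟩) := by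
  have hlift : ∀ {a b}, reachOn src tgt (insert e {e | col e ≠ ℓ}) a b →
      reachOn (hubSrc src tgt col ℓ) (hubTgt src tgt col ℓ) {Sum.inl ⟨e, he⟩}
        (some a) (some b) := by
    refine reachOn_hub_of_reachOn fun f hf => ?_
    simp only [Set.mem_insert_iff, Set.mem_ofPred_eq, not_or, not_not] at hf
    exact ⟨hf.2, by simpa using hf.1⟩
  have hhub : ∀ {a b}, colorComp src tgt col ℓ a = colorComp src tgt col ℓ b →
      reachOn src tgt {e} a b → ¬ reachOn src tgt (insert e {e | col e ≠ ℓ}) a b →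
      reachOn (hubSrc src tgt col ℓ) (hubTgt src tgt col ℓ) {Sum.inl ⟨e, he⟩} (some a) none := by
    intro a b hab h hnot
    obtain ⟨w, hw, hlive⟩ := exists_isLive_of_not_reachOn hab h hnot
    exact (hlift hw).trans (reachOn_hub_of_isLive hlive (by simp))
  rw [IsCutEdge, not_not]
  by_cases hends : reachOn src tgt (insert e {e | col e ≠ ℓ}) (src e) (tgt e)
  · exact hlift hends
  · have hcol : colorComp src tgt col ℓ (src e) = colorComp src tgt col ℓ (tgt e) :=
      he ▸ colorComp_src_eq_tgt e
    have hreach : reachOn src tgt {e} (src e) (tgt e) := not_not.mp hbridge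
    exact (hhub hcol hreach hends).trans
      (reachOn_symm (hhub hcol.symm (reachOn_symm hreach) fun h => hends (reachOn_symm h)))

lemma not_isCutEdge_hub_inr [Finite W] [Finite κ] (h : HubEdge src tgt col ℓ) :
    ¬ IsCutEdge (hubSrc src tgt col ℓ) (hubTgt src tgt col ℓ) (Sum.inr h) := by
  rw [IsCutEdge, not_not]
  rcases h with ⟨w, hw⟩ | ⟨C, second⟩
  · obtain ⟨w', hne, hcol, hw'⟩ := hw.exists_vertex_ne
    exact (reachOn_hub_of_colorComp_eq (by simp) hcol.symm).trans
      (reachOn_hub_of_isLive hw' (by simpa using hne))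
  · exact reachOn_of_edge (src := hubSrc src tgt col ℓ) (tgt := hubTgt src tgt col ℓ)
      (e := Sum.inr (Sum.inr (C, !second))) (by simp)

lemma not_isCutEdge_hub [Finite W] [Finite κ] (hbridge : ∀ e, ¬ IsCutEdge src tgt e) :
    ∀ e, ¬ IsCutEdge (hubSrc src tgt col ℓ) (hubTgt src tgt col ℓ) e
  | Sum.inl e => not_isCutEdge_hub_inl e.2 (hbridge e)
  | Sum.inr h => not_isCutEdge_hub_inr h

end Hub

section InjectiveSum

open scoped Matrix.Norms.L2Operator

variable {ι : Type*} [Fintype ι]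

lemma sum_pinned_option {W : Type*} [Fintype W] {T : Finset (Option W)}
    (hT : ∀ v, v ∉ T ↔ v = none) (i₀ : ι) (f : (Option W → ι) → ℂ) :
    ∑ φ ∈ pinned T i₀, f φ = ∑ ψ : W → ι, f fun v => v.elim i₀ ψ := by
  have hpin : ∀ {φ : Option W → ι}, φ ∈ pinned T i₀ ↔ φ none = i₀ := by simp [mem_pinned, hT]
  refine Finset.sum_bij' (fun φ _ w => φ (some w)) (fun ψ _ v => v.elim i₀ ψ)
    (by simp) (by simp [hpin]) ?_ (by simp) ?_
  · intro φ hφ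
    funext v
    cases v with
    | none => exact (hpin.mp hφ).symm
    | some w => rfl
  · intro φ hφ
    congr 1
    funext v
    cases v with
    | none => exact hpin.mp hφ
    | some w => rfl

lemma sum_embedding_eq_sum_ite {W : Type*} [Fintype W] (h : (W → ι) → ℂ) :
    ∑ ψ : W ↪ ι, h ψ = ∑ ψ : W → ι, if Function.Injective ψ then h ψ else 0 := by
  rw [← Finset.sum_filter, Finset.sum_subtype _ (by simp)
    (p := fun ψ : W → ι => Function.Injective ψ)]
  exact ((Equiv.subtypeInjectiveEquivEmbedding W ι).sum_comp fun ψ => h ψ).symm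

lemma prod_offDiag_one_sub_one_apply {W ι : Type*} [Fintype W] (ψ : W → ι) :
    ∏ p ∈ (Finset.univ : Finset W).offDiag, (1 - (1 : Matrix ι ι ℂ) (ψ p.1) (ψ p.2)) =
      if Function.Injective ψ then 1 else 0 := by
  split_ifs with hψ
  · refine Finset.prod_eq_one fun p hp => ?_
    rw [Matrix.one_apply_ne (hψ.ne (Finset.mem_offDiag.mp hp).2.2), sub_zero]
  · simp only [Function.Injective, not_forall] at hψ
    obtain ⟨a, b, hab, hne⟩ := hψ
    refine Finset.prod_eq_zero (i := (a, b)) (by simpa using hne) ?_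
    rw [show ψ (a, b).1 = ψ (a, b).2 from hab, Matrix.one_apply_eq, sub_self]

variable {W E κ : Type} {src tgt : E → W} {col : E → κ} [Fintype W] [Fintype E]

/-- The matrices on the edges of the subgraph of colour `ℓ` attached to a hub. -/
def hubEntries (col : E → κ) (ℓ : κ) (B : E → Matrix ι ι ℂ) (i₀ : ι) :
    {e : E // col e = ℓ} ⊕ HubEdge src tgt col ℓ → Matrix ι ι ℂ
  | Sum.inl e => B e
  | Sum.inr _ => hubMatrix i₀

lemma edgeWeight_hub (ℓ : κ) (B : E → Matrix ι ι ℂ) (i₀ : ι) (ψ : W → ι) :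
    edgeWeight (hubSrc src tgt col ℓ) (hubTgt src tgt col ℓ) (hubEntries col ℓ B i₀)
        Finset.univ (fun v => v.elim i₀ ψ) =
      ((√(Fintype.card ι) : ℝ) : ℂ)⁻¹ ^ Fintype.card (HubEdge src tgt col ℓ) *
        ∏ e : {e // col e = ℓ}, B e (ψ (tgt e)) (ψ (src e)) := by
  rw [edgeWeight, Fintype.prod_sum_type, mul_comm]
  simp [hubSrc, hubTgt, hubEntries, hubMatrix]

lemma weightBound_hub [Finite κ] (hbridge : ∀ e, ¬ IsCutEdge src tgt e) (ℓ : κ)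
    {B : E → Matrix ι ι ℂ} (hB : ∀ e, ‖B e‖ ≤ 1) (i₀ : ι) :
    WeightBound (Finset.univ.erase none) i₀
      (edgeWeight (hubSrc src tgt col ℓ) (hubTgt src tgt col ℓ) (hubEntries col ℓ B i₀)
        Finset.univ) (4 ^ (Fintype.card E + Fintype.card (HubEdge src tgt col ℓ))) := by
  have hentries : ∀ e, ‖hubEntries (src := src) (tgt := tgt) col ℓ B i₀ e‖ ≤ 1 := by
    rintro (e | _)
    exacts [hB e, l2_opNorm_hubMatrix_le i₀]
  convert (weightBound_of_bridgeless hentries i₀ none (reachOn_hub src tgt col ℓ)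
    (not_isCutEdge_hub hbridge)).mono (pow_le_pow_right₀ (by norm_num) ?_)
  rw [Fintype.card_sum]
  exact Nat.add_le_add_right (Fintype.card_subtype_le _) _

lemma norm_sum_embedding_le [Finite κ] (hbridge : ∀ e, ¬ IsCutEdge src tgt e) (ℓ : κ)
    {B : E → Matrix ι ι ℂ} (hB : ∀ e, ‖B e‖ ≤ 1) [Nonempty ι] :
    ‖∑ ψ : W ↪ ι, ∏ e : {e // col e = ℓ}, B e (ψ (tgt e)) (ψ (src e))‖ ≤
      5 ^ (Fintype.card W * Fintype.card W) *
        4 ^ (Fintype.card E + Fintype.card (HubEdge src tgt col ℓ)) *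
        √(Fintype.card ι) ^ Fintype.card (HubEdge src tgt col ℓ) := by
  obtain ⟨i₀⟩ := ‹Nonempty ι›
  rw [sum_embedding_eq_sum_ite fun ψ => ∏ e : {e // col e = ℓ}, B e (ψ (tgt e)) (ψ (src e))]
  set s := Fintype.card (HubEdge src tgt col ℓ)
  have hpos : 0 < √(Fintype.card ι : ℝ) := by
    have : 0 < Fintype.card ι := Fintype.card_pos_iff.mpr ⟨i₀⟩
    positivity
  set P : Finset (Option W × Option W) := (Finset.univ : Finset W).offDiag.map
    (Function.Embedding.some.prodMap Function.Embedding.some) with hP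
  have hPcard : P.card ≤ Fintype.card W * Fintype.card W := by
    rw [Finset.card_map, Finset.offDiag_card, Finset.card_univ]
    exact Nat.sub_le _ _
  have hinj : ∀ ψ : W → ι, ∏ p ∈ P, (1 - (1 : Matrix ι ι ℂ) (p.1.elim i₀ ψ) (p.2.elim i₀ ψ)) =
      if Function.Injective ψ then 1 else 0 := fun ψ => by
    rw [hP, Finset.prod_map]
    exact prod_offDiag_one_sub_one_apply ψ
  have hbound := ((weightBound_hub (col := col) hbridge ℓ hB i₀).mul_prod_ne P).norm_sum_le
  rw [sum_pinned_option (by simp)] at hbound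
  simp only [edgeWeight_hub, hinj, mul_boole] at hbound
  simp only [← mul_ite_zero, ← Finset.mul_sum] at hbound
  rw [norm_mul, norm_pow, norm_inv, Complex.norm_real, Real.norm_of_nonneg hpos.le, inv_pow,
    inv_mul_le_iff₀ (pow_pos hpos s), mul_comm] at hbound
  refine hbound.trans ?_
  gcongr
  norm_num

end InjectiveSum

/-! ### Averages over random permutations -/

section PermutationAverage

variable {ι W : Type*} [Fintype ι] [Fintype W]

lemma card_embedding_nsmul_sum_perm {M : Type*} [AddCommMonoid M] (f : W ↪ ι) (h : (W → ι) → M) :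
    Fintype.card (W ↪ ι) • ∑ σ : Equiv.Perm ι, h (σ ∘ f) =
      (Fintype.card ι).factorial • ∑ ψ : W ↪ ι, h ψ := by
  calc Fintype.card (W ↪ ι) • ∑ σ : Equiv.Perm ι, h (σ ∘ f)
      = ∑ ψ : W ↪ ι, ∑ σ : Equiv.Perm ι, h (σ ∘ ψ) := by
        rw [← Finset.card_univ, ← Finset.sum_const]
        refine Finset.sum_congr rfl fun ψ _ => ?_
        obtain ⟨τ, hτ⟩ := Equiv.Perm.exists_extending_pair f ψ f.injective ψ.injective
        rw [← Equiv.sum_comp (Equiv.mulRight τ) fun σ => h (σ ∘ f), ← funext hτ]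
        rfl
    _ = ∑ σ : Equiv.Perm ι, ∑ ψ : W ↪ ι, h (σ ∘ ψ) := Finset.sum_comm
    _ = ∑ _σ : Equiv.Perm ι, ∑ ψ : W ↪ ι, h ψ := Finset.sum_congr rfl fun σ _ =>
        ((Equiv.refl W).embeddingCongr σ).sum_comp fun ψ : W ↪ ι => h ψ
    _ = (Fintype.card ι).factorial • ∑ ψ : W ↪ ι, h ψ := by
        rw [Finset.sum_const, Finset.card_univ, Fintype.card_perm]

lemma pow_le_two_pow_mul_descFactorial {n k : ℕ} (h : 2 * k ≤ n) :
    n ^ k ≤ 2 ^ k * n.descFactorial k :=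
  calc n ^ k ≤ (2 * (n + 1 - k)) ^ k := Nat.pow_le_pow_left (by lia) _
    _ = 2 ^ k * (n + 1 - k) ^ k := mul_pow _ _ _
    _ ≤ 2 ^ k * n.descFactorial k := Nat.mul_le_mul_left _ (Nat.pow_sub_le_descFactorial _ _)

lemma norm_sum_perm_mul_pow_le (f : W ↪ ι) (h : (W → ι) → ℂ)
    (hcard : 2 * Fintype.card W ≤ Fintype.card ι) :
    ‖∑ σ : Equiv.Perm ι, h (σ ∘ f)‖ * (Fintype.card ι : ℝ) ^ Fintype.card W ≤
      (Fintype.card ι).factorial * 2 ^ Fintype.card W * ‖∑ ψ : W ↪ ι, h ψ‖ := by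
  have hsum := congrArg norm (card_embedding_nsmul_sum_perm f h)
  rw [nsmul_eq_mul, nsmul_eq_mul, norm_mul, norm_mul, Complex.norm_natCast, Complex.norm_natCast,
    Fintype.card_embedding_eq] at hsum
  have hpow : (Fintype.card ι : ℝ) ^ Fintype.card W ≤
      2 ^ Fintype.card W * (Fintype.card ι).descFactorial (Fintype.card W) :=
    mod_cast pow_le_two_pow_mul_descFactorial hcard
  calc _ ≤ ‖∑ σ : Equiv.Perm ι, h (σ ∘ f)‖ *
        (2 ^ Fintype.card W * (Fintype.card ι).descFactorial (Fintype.card W)) := by gcongr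
    _ = 2 ^ Fintype.card W * ((Fintype.card ι).descFactorial (Fintype.card W) *
        ‖∑ σ : Equiv.Perm ι, h (σ ∘ f)‖) := by ring
    _ = _ := by rw [hsum]; ring

end PermutationAverage

section Kernels

variable {ι V : Type*} [Fintype ι] [Fintype V]

instance fintypeSetoid : Fintype (Setoid V) :=
  Fintype.ofInjective (fun π => π.r) fun _ _ h => Setoid.ext fun a b => iff_of_eq (congr_fun₂ h a b)

lemma card_filter_ker_eq_le (π : Setoid V) :
    (Finset.univ.filter fun φ : V → ι => Setoid.ker φ = π).card ≤
      Fintype.card ι ^ Fintype.card (Quotient π) := by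
  rw [← Fintype.card_fun, ← Fintype.card_subtype]
  refine Fintype.card_le_of_injective
    (fun φ => (π.liftEquiv ⟨φ.1, φ.2.ge⟩ : Quotient π → ι)) fun φ φ' h => ?_
  exact Subtype.ext (Subtype.mk.inj (π.liftEquiv.injective h))

lemma sum_mul_inv_pow_card_quotient_ker_le {c : Setoid V → ℝ} (hc : 0 ≤ c) :
    ∑ φ : V → ι, c (Setoid.ker φ) *
        ((Fintype.card ι : ℝ) ^ Fintype.card (Quotient (Setoid.ker φ)))⁻¹ ≤
      ∑ π, c π := by
  rw [← Finset.sum_fiberwise (g := fun φ : V → ι => Setoid.ker φ)]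
  refine Finset.sum_le_sum fun π _ => ?_
  rw [Finset.sum_congr rfl (g := fun _ => c π *
    ((Fintype.card ι : ℝ) ^ Fintype.card (Quotient π))⁻¹) fun φ hφ => by
      obtain rfl := (Finset.mem_filter.mp hφ).2; congr, Finset.sum_const, nsmul_eq_mul,
    mul_left_comm]
  refine mul_le_of_le_one_right (hc π) (mul_inv_le_one_of_le₀ ?_ (by positivity))
  exact_mod_cast card_filter_ker_eq_le π

end Kernels

section Tight

open scoped Matrix.Norms.L2Operator

variable {ι W E κ : Type} {src tgt : E → W} {col : E → κ}

/-- A coloured graph is tight if it is connected, has no cut edge, and its bipartite graph of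
vertices and coloured components has a cycle. Averages over independent permutations, one for each
colour, of the weight of a labelling of such a graph by distinct labels are of the optimal order. -/
def IsTight (src tgt : E → W) (col : E → κ) : Prop :=
  IsConnectedGraph src tgt ∧ (∀ e, ¬ IsCutEdge src tgt e) ∧ ∃ p, IsLive src tgt col p

variable [Fintype ι] [Fintype E]

lemma sum_perms_prod_eq_prod_sum_perm [Fintype κ] (B : E → Matrix ι ι ℂ) (f : W → ι) :
    ∑ σ : κ → Equiv.Perm ι, ∏ e, B e (σ (col e) (f (tgt e))) (σ (col e) (f (src e))) =
      ∏ ℓ, ∑ σ : Equiv.Perm ι, ∏ e : {e // col e = ℓ}, B e (σ (f (tgt e))) (σ (f (src e))) := by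
  rw [Fintype.prod_sum]
  refine Finset.sum_congr rfl fun σ _ => ?_
  rw [← Fintype.prod_fiberwise col]
  refine Finset.prod_congr rfl fun ℓ _ => Finset.prod_congr rfl fun e _ => ?_
  rw [e.2]

variable [Fintype W] [Nonempty ι]

/-- The bound, in multiples of `n ^ (-w)`, for the average over independent permutations of the
weight of a tight graph with `w` vertices, `m` edges and `k` colours. -/
def tightConst (w m k : ℕ) : ℝ := (2 ^ w * 5 ^ (w * w) * 4 ^ m) ^ k * 4 ^ (2 * (k * w))

lemma norm_sum_perm_prod_le [Finite κ] (hbridge : ∀ e, ¬ IsCutEdge src tgt e) (ℓ : κ)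
    {B : E → Matrix ι ι ℂ} (hB : ∀ e, ‖B e‖ ≤ 1) (f : W ↪ ι)
    (hcard : 2 * Fintype.card W ≤ Fintype.card ι) :
    ‖∑ σ : Equiv.Perm ι, ∏ e : {e // col e = ℓ}, B e (σ (f (tgt e))) (σ (f (src e)))‖ ≤
      (Fintype.card ι).factorial *
        (2 ^ Fintype.card W * 5 ^ (Fintype.card W * Fintype.card W) * 4 ^ Fintype.card E) *
        (4 ^ Fintype.card (HubEdge src tgt col ℓ) *
          √(Fintype.card ι) ^ Fintype.card (HubEdge src tgt col ℓ)) *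
        ((Fintype.card ι : ℝ) ^ Fintype.card W)⁻¹ := by
  rw [le_mul_inv_iff₀ (pow_pos (Nat.cast_pos.mpr Fintype.card_pos) _)]
  refine (norm_sum_perm_mul_pow_le f
    (fun ψ => ∏ e : {e // col e = ℓ}, B e (ψ (tgt e)) (ψ (src e))) hcard).trans ?_
  refine (mul_le_mul_of_nonneg_left (norm_sum_embedding_le hbridge ℓ hB)
    (by positivity)).trans_eq ?_
  rw [pow_add]
  ring

lemma sqrt_pow_mul_inv_pow_le {n : ℝ} (hn : 1 ≤ n) {s w k : ℕ} (h : s + 2 * w ≤ 2 * (k * w)) :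
    √n ^ s * ((n ^ w)⁻¹) ^ k ≤ (n ^ w)⁻¹ := by
  have hn₀ : 0 ≤ n := zero_le_one.trans hn
  have hpow : ∀ m, 0 < n ^ m := pow_pos (one_pos.trans_le hn)
  rw [inv_pow, ← pow_mul, mul_inv_le_iff₀ (hpow _), ← div_eq_inv_mul, le_div_iff₀ (hpow _)]
  calc √n ^ s * n ^ w = √n ^ (s + 2 * w) := by rw [pow_add, pow_mul √n 2, Real.sq_sqrt hn₀]
    _ ≤ √n ^ (2 * (k * w)) := pow_le_pow_right₀ (Real.one_le_sqrt.mpr hn) h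
    _ = n ^ (w * k) := by rw [pow_mul √n 2, Real.sq_sqrt hn₀, mul_comm k]

lemma IsTight.norm_sum_perms_prod_le [Fintype κ] (h : IsTight src tgt col)
    {B : E → Matrix ι ι ℂ} (hB : ∀ e, ‖B e‖ ≤ 1) (f : W ↪ ι)
    (hcard : 2 * Fintype.card W ≤ Fintype.card ι) :
    ‖∑ σ : κ → Equiv.Perm ι, ∏ e, B e (σ (col e) (f (tgt e))) (σ (col e) (f (src e)))‖ ≤
      ((Fintype.card ι).factorial : ℝ) ^ Fintype.card κ *
        (tightConst (Fintype.card W) (Fintype.card E) (Fintype.card κ) *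
          ((Fintype.card ι : ℝ) ^ Fintype.card W)⁻¹) := by
  obtain ⟨hconn, hbridge, p, hp⟩ := h
  have hcount := sum_card_hubEdge_add_le hconn hp
  set w := Fintype.card W
  set s := ∑ ℓ, Fintype.card (HubEdge src tgt col ℓ)
  have hfour : (4 : ℝ) ^ s ≤ 4 ^ (2 * (Fintype.card κ * w)) :=
    pow_le_pow_right₀ (by norm_num) (by lia)
  have hsqrt := sqrt_pow_mul_inv_pow_le (n := Fintype.card ι)
    (mod_cast Fintype.card_pos (α := ι)) hcount
  rw [sum_perms_prod_eq_prod_sum_perm, norm_prod]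
  refine (Finset.prod_le_prod (fun _ _ => norm_nonneg _) fun ℓ _ =>
    norm_sum_perm_prod_le hbridge ℓ hB f hcard).trans ?_
  simp only [Finset.prod_mul_distrib, Finset.prod_const, Finset.card_univ,
    Finset.prod_pow_eq_pow_sum]
  calc _ = ((Fintype.card ι).factorial : ℝ) ^ Fintype.card κ *
        ((2 ^ w * 5 ^ (w * w) * 4 ^ Fintype.card E) ^ Fintype.card κ * 4 ^ s *
          (√(Fintype.card ι) ^ s * (((Fintype.card ι : ℝ) ^ w)⁻¹) ^ Fintype.card κ)) := by
        simp only [mul_pow]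
        ring
    _ ≤ _ := by rw [tightConst]; gcongr

end Tight

section TightLabellings

open scoped Matrix.Norms.L2Operator

variable {ι V E κ : Type} [Fintype ι] [Nonempty ι] [Fintype V] [Fintype E] [Fintype κ]

lemma norm_sum_perms_sum_prod_le (src tgt : E → V) (col : E → κ) {Φ : Finset (V → ι)}
    (hΦ : ∀ φ ∈ Φ,
      IsTight (Quotient.mk (Setoid.ker φ) ∘ src) (Quotient.mk (Setoid.ker φ) ∘ tgt) col)
    {B : E → Matrix ι ι ℂ} (hB : ∀ e, ‖B e‖ ≤ 1)
    (hcard : 2 * Fintype.card V ≤ Fintype.card ι) :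
    ‖∑ σ : κ → Equiv.Perm ι, ∑ φ ∈ Φ,
        ∏ e, B e (σ (col e) (φ (tgt e))) (σ (col e) (φ (src e)))‖ ≤
      ((Fintype.card ι).factorial : ℝ) ^ Fintype.card κ *
        ∑ π : Setoid V,
          tightConst (Fintype.card (Quotient π)) (Fintype.card E) (Fintype.card κ) := by
  set c : Setoid V → ℝ := fun π =>
    tightConst (Fintype.card (Quotient π)) (Fintype.card E) (Fintype.card κ)
  have hc : 0 ≤ c := fun π => by simp only [c, tightConst, Pi.zero_apply]; positivity
  rw [Finset.sum_comm]
  refine (norm_sum_le_of_le Φ fun φ hφ => (hΦ φ hφ).norm_sum_perms_prod_le hB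
    ⟨Setoid.kerLift φ, Setoid.kerLift_injective φ⟩
    ((Nat.mul_le_mul_left 2 (Fintype.card_quotient_le _)).trans hcard)).trans ?_
  rw [← Finset.mul_sum]
  gcongr
  refine (Finset.sum_le_univ_sum_of_nonneg fun φ => ?_).trans
    (sum_mul_inv_pow_card_quotient_ker_le hc)
  exact mul_nonneg (hc _) (by positivity)

end TightLabellings

/-! ### Cacti -/

namespace GraphMonomial

variable {L : ℕ} {K : Type} {g : GraphMonomial L K}

lemma reachOn_step {F : Set g.E} {s : g.E × Bool} (hs : s.1 ∉ F) :
    reachOn g.src g.tgt F (g.stepSrc s) (g.stepTgt s) := by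
  obtain ⟨e, _ | _⟩ := s
  · exact reachOn_symm (reachOn_of_edge hs)
  · exact reachOn_of_edge hs

lemma reachOn_steps {c : ℕ → g.E × Bool} (hc : ∀ k, g.stepTgt (c k) = g.stepSrc (c (k + 1)))
    {F : Set g.E} {m : ℕ} (hF : ∀ k, 0 < k → k < m → (c k).1 ∉ F) (hm : 0 < m) :
    reachOn g.src g.tgt F (g.stepTgt (c 0)) (g.stepSrc (c m)) := by
  induction m, hm using Nat.le_induction with
  | base => rw [hc 0]; exact .refl
  | succ m hm ih =>
    rw [← hc m]
    exact (ih fun k hk hkm => hF k hk (hkm.trans m.lt_succ_self)).trans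
      (reachOn_step (hF m hm m.lt_succ_self))

lemma IsSimpleCycle.reachOn_of_mem {c : List (g.E × Bool)} (hc : g.IsSimpleCycle c)
    {s : g.E × Bool} (hs : s ∈ c) : reachOn g.src g.tgt {s.1} (g.stepTgt s) (g.stepSrc s) := by
  obtain ⟨hne, hcyc, hnodup, -⟩ := hc
  have hpos : 0 < c.length := List.length_pos_iff.mpr hne
  obtain ⟨⟨i, hi⟩, rfl⟩ := List.mem_iff_get.mp hs
  let c' : ℕ → g.E × Bool := fun k => c.get ⟨(i + k) % c.length, Nat.mod_lt _ hpos⟩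
  have hstep : ∀ k, g.stepTgt (c' k) = g.stepSrc (c' (k + 1)) := fun k => by
    simpa only [c', Nat.mod_add_mod, ← add_assoc] using hcyc ⟨(i + k) % c.length, Nat.mod_lt _ hpos⟩
  have hfirst : c' 0 = c.get ⟨i, hi⟩ := by simp [c', Nat.mod_eq_of_lt hi]
  have hlast : c' c.length = c.get ⟨i, hi⟩ := by simp [c', Nat.mod_eq_of_lt hi]
  have hother : ∀ k, 0 < k → k < c.length → (c' k).1 ∉ ({(c.get ⟨i, hi⟩).1} : Set g.E) := by
    intro k hk hkc hmem
    have hget : (c.map Prod.fst)[(i + k) % c.length]'(by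
        rw [List.length_map]; exact Nat.mod_lt _ hpos) =
        (c.map Prod.fst)[i]'(by rwa [List.length_map]) := by simpa [c'] using hmem
    have hmod : i + k ≡ i + 0 [MOD c.length] :=
      ((List.Nodup.getElem_inj_iff hnodup).mp hget).trans (Nat.mod_eq_of_lt hi).symm
    exact Nat.not_dvd_of_pos_of_lt hk hkc
      ((Nat.modEq_zero_iff_dvd).mp (Nat.ModEq.add_left_cancel' i hmod))
  have hreach := reachOn_steps hstep hother hpos
  rwa [hfirst, hlast] at hreach

lemma IsOrientedCactus.not_isCutEdge (hg : g.IsOrientedCactus) (e : g.E) :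
    ¬ IsCutEdge g.src g.tgt e := by
  obtain ⟨_, ⟨⟨c, hc, rfl⟩, he⟩, -⟩ := hg.2.2 e
  obtain ⟨s, hs, rfl⟩ := List.mem_map.mp (List.mem_toFinset.mp he)
  rw [IsCutEdge, not_not]
  have hreach := hc.reachOn_of_mem hs
  obtain ⟨e, _ | _⟩ := s
  · exact hreach
  · exact reachOn_symm hreach

end GraphMonomial

/-! ### Diagrams -/

/-- A finite graph whose edges carry a colour and a label, the Boolean telling whether the label
stands for a matrix (`true`) or for its adjoint, together with two roots and a condition on the
partition of the vertices induced by a labelling. Diagrams encode products, adjoints, diagonal and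
off-diagonal parts of graph monomials. -/
structure Diagram (κ K : Type) where
  V : Type
  E : Type
  fintV : Fintype V
  fintE : Fintype E
  src : E → V
  tgt : E → V
  col : E → κ
  lab : E → K × Bool
  vin : V
  vout : V
  ok : Setoid V → Prop

attribute [instance] Diagram.fintV Diagram.fintE

/-- The matrices of a coloured family together with their adjoints. -/
def signed {κ K ι : Type} (A : κ → K → Matrix ι ι ℂ) (ℓ : κ) (x : K × Bool) : Matrix ι ι ℂ :=
  if x.2 then A ℓ x.1 else (A ℓ x.1)ᴴ

namespace Diagram

variable {κ K ι : Type}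

section Eval

/-- The weight of a labelling of the vertices of a diagram. -/
def weight (D : Diagram κ K) (A : κ → K → Matrix ι ι ℂ) (φ : D.V → ι) : ℂ :=
  ∏ e, signed A (D.col e) (D.lab e) (φ (D.tgt e)) (φ (D.src e))

variable [Fintype ι] [DecidableEq ι]

/-- The matrix whose entries are the sums of the weights of the admissible labellings with
prescribed values at the roots. -/
def eval (D : Diagram κ K) (A : κ → K → Matrix ι ι ℂ) : Matrix ι ι ℂ :=
  Matrix.of fun i j => ∑ φ : D.V → ι,
    if D.ok (Setoid.ker φ) ∧ φ D.vin = j ∧ φ D.vout = i then D.weight A φ else 0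

/-- The admissible labellings of a diagram that take the same value at both roots. -/
def closedLabellings (D : Diagram κ K) (ι : Type) [Fintype ι] [DecidableEq ι] :
    Finset (D.V → ι) :=
  Finset.univ.filter fun φ => D.ok (Setoid.ker φ) ∧ φ D.vout = φ D.vin

lemma trace_eval (D : Diagram κ K) (A : κ → K → Matrix ι ι ℂ) :
    (D.eval A).trace = ∑ φ ∈ D.closedLabellings ι, D.weight A φ := by
  simp only [Matrix.trace, Matrix.diag, eval, Matrix.of_apply, closedLabellings]
  rw [Finset.sum_comm, Finset.sum_filter]
  refine Finset.sum_congr rfl fun φ _ => ?_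
  by_cases h : D.ok (Setoid.ker φ) ∧ φ D.vout = φ D.vin
  · rw [if_pos h, Finset.sum_eq_single (φ D.vin), if_pos ⟨h.1, rfl, h.2⟩]
    · exact fun i _ hi => if_neg fun h' => hi h'.2.1.symm
    · simp
  · rw [if_neg h]
    exact Finset.sum_eq_zero fun i _ => if_neg fun h' => h ⟨h'.1, h'.2.2.trans h'.2.1.symm⟩

end Eval

/-- The diagram of a graph monomial. -/
def ofMonomial {L : ℕ} (g : GraphMonomial L K) : Diagram (Fin L) K where
  V := g.V
  E := g.E
  fintV := g.fintV
  fintE := g.fintE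
  src := g.src
  tgt := g.tgt
  col := g.labL
  lab e := (g.labK e, true)
  vin := g.vin
  vout := g.vout
  ok _ := True

lemma eval_ofMonomial {L N : ℕ} (g : GraphMonomial L K)
    (A : Fin L → K → Matrix (Fin N) (Fin N) ℂ) : (ofMonomial g).eval A = g.eval A := by
  ext i j
  simp only [eval, GraphMonomial.eval, Matrix.of_apply]
  refine Finset.sum_congr rfl fun φ _ => if_congr (by simp [ofMonomial]) ?_ rfl
  exact Finset.prod_congr rfl fun e _ => congrFun (congrFun (if_pos rfl) _) _

/-- The diagram of a single matrix. -/
def edge (ℓ : κ) (k : K) : Diagram κ K where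
  V := Bool
  E := Unit
  fintV := inferInstance
  fintE := inferInstance
  src _ := false
  tgt _ := true
  col _ := ℓ
  lab _ := (k, true)
  vin := false
  vout := true
  ok _ := True

lemma eval_edge [Fintype ι] [DecidableEq ι] (ℓ : κ) (k : K) (A : κ → K → Matrix ι ι ℂ) :
    (edge ℓ k).eval A = A ℓ k := by
  ext i j
  have hweight : ∀ φ, (edge ℓ k).weight A φ = A ℓ k (φ (edge ℓ k).vout) (φ (edge ℓ k).vin) := by
    intro φ
    change ∏ _e : Unit, signed A ℓ (k, true) (φ (edge ℓ k).vout) (φ (edge ℓ k).vin) = _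
    simp [signed]
  simp only [eval, hweight, Matrix.of_apply]
  rw [Finset.sum_eq_single (show (edge ℓ k).V → ι from fun b : Bool => if b then i else j)]
  · exact if_pos ⟨trivial, rfl, rfl⟩
  · refine fun φ _ hφ => if_neg fun h => hφ (funext fun b => ?_)
    cases b
    exacts [h.2.1, h.2.2]
  · exact fun h => absurd (Finset.mem_univ _) h

/-- The diagram of the identity matrix. -/
def one : Diagram κ K where
  V := Unit
  E := Empty
  fintV := inferInstance
  fintE := inferInstance
  src := Empty.elim
  tgt := Empty.elim
  col := Empty.elim
  lab := Empty.elim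
  vin := ()
  vout := ()
  ok _ := True

lemma eval_one [Fintype ι] [DecidableEq ι] (A : κ → K → Matrix ι ι ℂ) :
    (one : Diagram κ K).eval A = 1 := by
  ext i j
  have hweight : ∀ φ, (one : Diagram κ K).weight A φ = 1 := fun φ =>
    Finset.prod_eq_one fun e _ => Empty.elim e
  simp only [eval, hweight, Matrix.of_apply, Matrix.one_apply]
  split_ifs with h
  · subst h
    rw [Finset.sum_eq_single fun _ => i]
    · exact if_pos ⟨trivial, rfl, rfl⟩
    · exact fun φ _ hφ => if_neg fun h => hφ (funext fun _ => h.2.1)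
    · exact fun h => absurd (Finset.mem_univ _) h
  · exact Finset.sum_eq_zero fun φ _ => if_neg fun h' => h (h'.2.2.symm.trans h'.2.1)

/-- The product of two diagrams, in which the input of the first factor and the output of the
second are not identified but required to carry the same label. -/
def mul (D D' : Diagram κ K) : Diagram κ K where
  V := D.V ⊕ D'.V
  E := D.E ⊕ D'.E
  fintV := inferInstance
  fintE := inferInstance
  src := Sum.map D.src D'.src
  tgt := Sum.map D.tgt D'.tgt
  col := Sum.elim D.col D'.col
  lab := Sum.elim D.lab D'.lab
  vin := Sum.inr D'.vin
  vout := Sum.inl D.vout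
  ok π := D.ok (π.comap Sum.inl) ∧ D'.ok (π.comap Sum.inr) ∧ π (Sum.inl D.vin) (Sum.inr D'.vout)

lemma weight_mul (D D' : Diagram κ K) (A : κ → K → Matrix ι ι ℂ)
    (φ : (D.mul D').V → ι) :
    (D.mul D').weight A φ = D.weight A (φ ∘ Sum.inl) * D'.weight A (φ ∘ Sum.inr) :=
  Fintype.prod_sum_type _

lemma eval_mul [Fintype ι] [DecidableEq ι] (D D' : Diagram κ K) (A : κ → K → Matrix ι ι ℂ) :
    (D.mul D').eval A = D.eval A * D'.eval A := by
  ext i j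
  rw [Matrix.mul_apply]
  simp only [eval, Matrix.of_apply, Finset.sum_mul_sum]
  have hsum : ∀ f : ι → (D.V → ι) → (D'.V → ι) → ℂ,
      ∑ k, ∑ φ, ∑ φ', f k φ φ' = ∑ p : (D.V → ι) × (D'.V → ι), ∑ k, f k p.1 p.2 := fun f => by
    rw [Fintype.sum_prod_type, Finset.sum_comm]
    exact Finset.sum_congr rfl fun _ _ => Finset.sum_comm
  refine Eq.trans ?_ (hsum _).symm
  let split : ((D.mul D').V → ι) ≃ (D.V → ι) × (D'.V → ι) := Equiv.sumArrowEquivProdArrow D.V D'.V ι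
  refine Fintype.sum_equiv split _ _ fun φ => ?_
  have hsplit : split φ = (φ ∘ Sum.inl, φ ∘ Sum.inr) := rfl
  rw [hsplit, weight_mul D D' A φ]
  by_cases h : (D.mul D').ok (Setoid.ker φ) ∧ φ (D.mul D').vin = j ∧ φ (D.mul D').vout = i
  · rw [if_pos h, Finset.sum_eq_single (φ (Sum.inl D.vin)), if_pos, if_pos]
    · exact ⟨h.1.2.1, h.2.1, h.1.2.2.symm⟩
    · exact ⟨h.1.1, rfl, h.2.2⟩
    · exact fun k _ hk => mul_eq_zero_of_left (if_neg fun h' => hk h'.2.1.symm) _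
    · simp
  · rw [if_neg h]
    symm
    refine Finset.sum_eq_zero fun k _ => ?_
    rw [ite_zero_mul_ite_zero, if_neg]
    rintro ⟨⟨hD, hin, hout⟩, hD', hin', hout'⟩
    exact h ⟨⟨hD, hD', hin.trans hout'.symm⟩, hin', hout⟩

/-- The off-diagonal part of a diagram. -/
def offDiag (D : Diagram κ K) : Diagram κ K where
  __ := D
  ok π := D.ok π ∧ ¬ π D.vout D.vin

lemma eval_offDiag {N : ℕ} (D : Diagram κ K) (A : κ → K → Matrix (Fin N) (Fin N) ℂ) :
    D.offDiag.eval A = D.eval A - dproj (D.eval A) := by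
  ext i j
  simp only [Matrix.sub_apply, dproj, eval, Matrix.of_apply]
  by_cases hij : i = j
  · rw [if_pos hij, sub_self]
    exact Finset.sum_eq_zero fun φ _ => if_neg fun h => h.1.2 (h.2.2.trans (hij.trans h.2.1.symm))
  · rw [if_neg hij, sub_zero]
    refine Finset.sum_congr rfl fun φ _ => if_congr ?_ rfl rfl
    refine ⟨fun h => ⟨h.1.1, h.2⟩, fun h => ⟨⟨h.1, fun h' => hij ?_⟩, h.2⟩⟩
    exact h.2.2.symm.trans (h'.trans h.2.1)

/-- The diagonal part of a diagram. -/
def diag (D : Diagram κ K) : Diagram κ K where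
  __ := D
  ok π := D.ok π ∧ π D.vout D.vin

lemma eval_diag {N : ℕ} (D : Diagram κ K) (A : κ → K → Matrix (Fin N) (Fin N) ℂ) :
    D.diag.eval A = dproj (D.eval A) := by
  ext i j
  simp only [dproj, eval, Matrix.of_apply]
  by_cases hij : i = j
  · rw [if_pos hij]
    refine Finset.sum_congr rfl fun φ _ => if_congr ?_ rfl rfl
    refine ⟨fun h => ⟨h.1.1, h.2⟩, fun h => ⟨⟨h.1, ?_⟩, h.2⟩⟩
    exact h.2.2.trans (hij.trans h.2.1.symm)
  · rw [if_neg hij]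
    exact Finset.sum_eq_zero fun φ _ => if_neg fun h =>
      hij (h.2.2.symm.trans (h.1.2.trans h.2.1))

/-- The adjoint of a diagram. -/
def star (D : Diagram κ K) : Diagram κ K where
  __ := D
  src := D.tgt
  tgt := D.src
  lab e := ((D.lab e).1, !(D.lab e).2)
  vin := D.vout
  vout := D.vin

lemma eval_star [Fintype ι] [DecidableEq ι] (D : Diagram κ K) (A : κ → K → Matrix ι ι ℂ) :
    D.star.eval A = (D.eval A)ᴴ := by
  ext i j
  rw [Matrix.conjTranspose_apply]
  simp only [eval, Matrix.of_apply, star_sum]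
  refine Finset.sum_congr rfl fun φ _ => ?_
  rw [apply_ite Star.star, star_zero]
  refine if_congr ⟨fun h => ⟨h.1, h.2.2, h.2.1⟩, fun h => ⟨h.1, h.2.2, h.2.1⟩⟩ ?_ rfl
  refine Eq.trans ?_ (star_prod _ _).symm
  refine Finset.prod_congr rfl fun e _ => ?_
  rcases hl : D.lab e with ⟨k, _ | _⟩ <;> simp [star, signed, hl]

/-- The product of a list of diagrams. -/
def listProd (l : List (Diagram κ K)) : Diagram κ K := l.foldr mul one

lemma eval_listProd [Fintype ι] [DecidableEq ι] (l : List (Diagram κ K))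
    (A : κ → K → Matrix ι ι ℂ) : (listProd l).eval A = (l.map fun D => D.eval A).prod := by
  induction l with
  | nil => exact eval_one A
  | cons D l ih =>
    rw [List.map_cons, List.prod_cons, ← ih, ← eval_mul]
    rfl

end Diagram

section ReachLift

variable {V V' E E' W κ : Type} {src tgt : E → W} {src' tgt' : E' → W} {F : Set E} {G : Set E'}
  {a b : W}

lemma reachOn_swap (h : reachOn src tgt F a b) : reachOn tgt src F a b :=
  reachOn_lift id (fun _ he => reachOn_symm (reachOn_of_edge he)) h

lemma reachOn_map_edges (f : E → E') (hsrc : src' ∘ f = src) (htgt : tgt' ∘ f = tgt)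
    (hF : ∀ e, e ∉ F → f e ∉ G) (h : reachOn src tgt F a b) : reachOn src' tgt' G a b := by
  subst hsrc htgt
  exact reachOn_lift id (fun e he => reachOn_of_edge (hF e he)) h

lemma reachOn_comp (q : W → V) (h : reachOn src tgt F a b) :
    reachOn (q ∘ src) (q ∘ tgt) F (q a) (q b) :=
  reachOn_lift q (fun _ he => reachOn_of_edge he) h

lemma ColorChain.map_edges {col : E → κ} {col' : E' → κ} (f : E → E') (hsrc : src' ∘ f = src)
    (htgt : tgt' ∘ f = tgt) (hcol : col' ∘ f = col) {ls : List κ}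
    (h : ColorChain src tgt col ls a b) : ColorChain src' tgt' col' ls a b := by
  induction ls generalizing a with
  | nil => exact h
  | cons ℓ ls ih =>
    obtain ⟨c, hac, hcomp, hc⟩ := h
    refine ⟨c, hac, colorComp_eq_iff.mpr ?_, ih hc⟩
    exact reachOn_map_edges f hsrc htgt (fun e => by simp [← hcol]) (colorComp_eq_iff.mp hcomp)

end ReachLift

namespace Diagram

variable {κ K : Type} {D D' : Diagram κ K} {ℓ : κ} {ls : List κ}

/-- The sources of the edges of the closed diagram, which has an extra edge `none` from the output
to the input. -/
def closedSrc (D : Diagram κ K) (e : Option D.E) : D.V := e.elim D.vout D.src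

/-- The targets of the edges of the closed diagram, which has an extra edge `none` from the output
to the input. -/
def closedTgt (D : Diagram κ K) (e : Option D.E) : D.V := e.elim D.vin D.tgt

/-- Every quotient of the diagram by an admissible labelling is connected, and none of its edges is
a cut edge once the roots are joined by an extra edge. -/
def IsCircular (D : Diagram κ K) : Prop :=
  ∀ ⦃W : Type⦄ (q : D.V → W), D.ok (Setoid.ker q) →
    (∀ v, reachOn (q ∘ D.src) (q ∘ D.tgt) ∅ (q v) (q D.vout)) ∧
    ∀ e, reachOn (q ∘ D.closedSrc) (q ∘ D.closedTgt) {some e} (q (D.src e)) (q (D.tgt e))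

/-- In every quotient by an admissible labelling the roots are joined by edges of colour `ℓ`. -/
def JoinedBy (ℓ : κ) (D : Diagram κ K) : Prop :=
  ∀ ⦃W : Type⦄ (q : D.V → W), D.ok (Setoid.ker q) →
    reachOn (q ∘ D.src) (q ∘ D.tgt) {e | D.col e ≠ ℓ} (q D.vout) (q D.vin)

/-- In every quotient by an admissible labelling the roots are joined by a chain with the given
colours. -/
def ChainBy (ls : List κ) (D : Diagram κ K) : Prop :=
  ∀ ⦃W : Type⦄ (q : D.V → W), D.ok (Setoid.ker q) →
    ColorChain (q ∘ D.src) (q ∘ D.tgt) D.col ls (q D.vout) (q D.vin)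

/-- Every quotient by an admissible labelling contains a closed chain with the given colours. -/
def HasClosedChain (ls : List κ) (D : Diagram κ K) : Prop :=
  ∀ ⦃W : Type⦄ (q : D.V → W), D.ok (Setoid.ker q) →
    ∃ a, ColorChain (q ∘ D.src) (q ∘ D.tgt) D.col ls a a

lemma isCircular_ofMonomial {L : ℕ} {g : GraphMonomial L K} (hg : g.IsOrientedCactus) :
    (ofMonomial g).IsCircular := fun _ q _ =>
  ⟨fun v => reachOn_comp q (hg.1 v g.vout), fun e => reachOn_map_edges some rfl rfl
    (fun _ he he' => he (Option.some_injective _ he'))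
    (reachOn_comp q (not_not.mp (hg.not_isCutEdge e)))⟩

lemma isCircular_edge (ℓ : κ) (k : K) : (edge ℓ k).IsCircular := by
  refine fun W q _ => ⟨fun v => ?_, fun e => ?_⟩
  · cases v
    · exact reachOn_of_edge (src := q ∘ (edge ℓ k).src) (e := ()) (Set.notMem_empty _)
    · exact .refl
  · exact reachOn_symm (reachOn_of_edge (src := q ∘ (edge ℓ k).closedSrc) (e := none) nofun)

lemma isCircular_one : (one : Diagram κ K).IsCircular :=
  fun _ _ _ => ⟨fun _ => .refl, fun e => Empty.elim e⟩

section Mul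

variable {W : Type} (q : (D.mul D').V → W) {a b : W}

lemma reachOn_mul_inl {F : Set D.E} {G : Set (D.mul D').E} (hFG : ∀ e, e ∉ F → Sum.inl e ∉ G)
    (h : reachOn ((q ∘ Sum.inl) ∘ D.src) ((q ∘ Sum.inl) ∘ D.tgt) F a b) :
    reachOn (q ∘ (D.mul D').src) (q ∘ (D.mul D').tgt) G a b :=
  reachOn_map_edges (Sum.inl : D.E → (D.mul D').E) rfl rfl hFG h

lemma reachOn_mul_inr {F : Set D'.E} {G : Set (D.mul D').E} (hFG : ∀ e, e ∉ F → Sum.inr e ∉ G)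
    (h : reachOn ((q ∘ Sum.inr) ∘ D'.src) ((q ∘ Sum.inr) ∘ D'.tgt) F a b) :
    reachOn (q ∘ (D.mul D').src) (q ∘ (D.mul D').tgt) G a b :=
  reachOn_map_edges (Sum.inr : D'.E → (D.mul D').E) rfl rfl hFG h

end Mul

lemma reachOn_closed_of_roots {W : Type} {q : D.V → W} {E' : Type} {src' tgt' : E' → W}
    {G : Set E'} {f : D.E → E'} (hsrc : src' ∘ f = q ∘ D.src) (htgt : tgt' ∘ f = q ∘ D.tgt)
    (hroots : reachOn src' tgt' G (q D.vout) (q D.vin)) {e : D.E}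
    (hf : ∀ e', e' ≠ e → f e' ∉ G) {a b : W}
    (h : reachOn (q ∘ D.closedSrc) (q ∘ D.closedTgt) {some e} a b) : reachOn src' tgt' G a b := by
  refine reachOn_lift id ?_ h
  rintro (_ | e') he'
  · exact hroots
  · have hedge := reachOn_of_edge (src := src') (tgt := tgt')
      (hf e' fun heq => he' (congrArg some heq))
    rwa [← Function.comp_apply (f := src'), ← Function.comp_apply (f := tgt'), hsrc, htgt] at hedge

lemma IsCircular.mul (h : D.IsCircular) (h' : D'.IsCircular) : (D.mul D').IsCircular := by
  rintro W q ⟨hq, hq', hm : (q ∘ Sum.inl) D.vin = (q ∘ Sum.inr) D'.vout⟩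
  obtain ⟨hconn, hedge⟩ := h (q ∘ Sum.inl) hq
  obtain ⟨hconn', hedge'⟩ := h' (q ∘ Sum.inr) hq'
  refine ⟨?_, ?_⟩
  · have hinl := fun v => reachOn_mul_inl q (G := ∅) (fun _ _ => Set.notMem_empty _) (hconn v)
    have hinr := fun v => reachOn_mul_inr q (G := ∅) (fun _ _ => Set.notMem_empty _) (hconn' v)
    rintro (v | v)
    · exact hinl v
    · exact (hm ▸ hinr v).trans (hinl D.vin)
  -- In the closed product, the other factor and the closing edge join the roots of each factor.
  have hclose : ∀ e, reachOn (q ∘ (D.mul D').closedSrc) (q ∘ (D.mul D').closedTgt) {some e}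
      ((q ∘ Sum.inl) D.vout) ((q ∘ Sum.inr) D'.vin) := fun e =>
    reachOn_of_edge (src := q ∘ (D.mul D').closedSrc) (F := {some e}) (e := none)
      (Option.some_ne_none e).symm
  rintro (e | e)
  · refine reachOn_closed_of_roots (f := fun e => some (Sum.inl e)) rfl rfl ?_
      (fun _ hne heq => hne (Sum.inl_injective (Option.some_injective _ heq))) (hedge e)
    rw [hm]
    exact (hclose _).trans (reachOn_map_edges (fun e => some (Sum.inr e)) rfl rfl
      (fun _ _ heq => Sum.inr_ne_inl (Option.some_injective _ heq)) (hconn' D'.vin))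
  · refine reachOn_closed_of_roots (f := fun e => some (Sum.inr e)) rfl rfl ?_
      (fun _ hne heq => hne (Sum.inr_injective (Option.some_injective _ heq))) (hedge' e)
    refine .trans ?_ (hclose _)
    rw [← hm]
    exact reachOn_map_edges (fun e => some (Sum.inl e)) rfl rfl
      (fun _ _ heq => Sum.inl_ne_inr (Option.some_injective _ heq)) (hconn D.vin)

lemma IsCircular.offDiag (h : D.IsCircular) : D.offDiag.IsCircular := fun _ q hq => h q hq.1

lemma IsCircular.diag (h : D.IsCircular) : D.diag.IsCircular := fun _ q hq => h q hq.1

lemma IsCircular.star (h : D.IsCircular) : D.star.IsCircular := by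
  intro W q hq
  obtain ⟨hconn, hedge⟩ := h q hq
  refine ⟨fun v => reachOn_swap ((hconn v).trans (reachOn_symm (hconn D.vin))), fun e => ?_⟩
  refine reachOn_map_edges id (funext ?_) (funext ?_) (fun _ he => he)
    (reachOn_symm (reachOn_swap (hedge e))) <;> rintro (_ | _) <;> rfl

lemma isCircular_listProd {l : List (Diagram κ K)} (h : ∀ D ∈ l, D.IsCircular) :
    (listProd l).IsCircular := by
  induction l with
  | nil => exact isCircular_one
  | cons D l ih =>
    rw [List.forall_mem_cons] at h
    exact h.1.mul (ih h.2)

lemma joinedBy_ofMonomial {L : ℕ} {g : GraphMonomial L K} (hg : g.vin = g.vout) (ℓ : Fin L) :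
    JoinedBy ℓ (ofMonomial g) := fun W q _ => by
  rw [show q (ofMonomial g).vin = q (ofMonomial g).vout from congrArg q hg]
  exact .refl

lemma joinedBy_edge (ℓ : κ) (k : K) : JoinedBy ℓ (edge ℓ k) := fun _ q _ =>
  reachOn_symm (reachOn_of_edge (src := q ∘ (edge ℓ k).src) (e := ()) (not_not.mpr rfl))

lemma joinedBy_one (ℓ : κ) : JoinedBy ℓ (one : Diagram κ K) := fun _ _ _ => .refl

lemma JoinedBy.mul (h : JoinedBy ℓ D) (h' : JoinedBy ℓ D') : JoinedBy ℓ (D.mul D') := by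
  rintro W q ⟨hq, hq', hm : (q ∘ Sum.inl) D.vin = (q ∘ Sum.inr) D'.vout⟩
  have hr := reachOn_mul_inr q (G := {e | (D.mul D').col e ≠ ℓ}) (fun _ he => he)
    (h' (q ∘ Sum.inr) hq')
  rw [← hm] at hr
  exact (reachOn_mul_inl q (fun _ he => he) (h (q ∘ Sum.inl) hq)).trans hr

lemma joinedBy_listProd {l : List (Diagram κ K)} (h : ∀ D ∈ l, JoinedBy ℓ D) :
    JoinedBy ℓ (listProd l) := by
  induction l with
  | nil => exact joinedBy_one ℓ
  | cons D l ih =>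
    rw [List.forall_mem_cons] at h
    exact h.1.mul (ih h.2)

lemma chainBy_listProd_offDiag {α : Type*} {f : α → Diagram κ K} {ℓ : α → κ}
    (h : ∀ i, JoinedBy (ℓ i) (f i)) (l : List α) :
    ChainBy (l.map ℓ) (listProd (l.map fun i => (f i).offDiag)) := by
  induction l with
  | nil => exact fun _ _ _ => rfl
  | cons i l ih =>
    rintro W q ⟨hq, hq', hm : q (Sum.inl (f i).vin) = q (Sum.inr _)⟩
    refine ⟨q (Sum.inl (f i).vin), hq.2, colorComp_eq_iff.mpr ?_, ?_⟩
    · exact reachOn_mul_inl (D := (f i).offDiag) q (fun _ he => he) (h i _ hq.1)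
    · rw [hm]
      exact (ih (q ∘ Sum.inr) hq').map_edges Sum.inr rfl rfl rfl

lemma ChainBy.diag (h : ChainBy ls D) : HasClosedChain ls D.diag := fun W q hq => by
  have hchain := h q hq.1
  rw [show q D.vout = q D.vin from hq.2] at hchain
  exact ⟨_, hchain⟩

lemma HasClosedChain.mul_right (h : HasClosedChain ls D) (D' : Diagram κ K) :
    HasClosedChain ls (D.mul D') := by
  rintro W q ⟨hq, -, -⟩
  obtain ⟨a, ha⟩ := h _ hq
  exact ⟨a, ha.map_edges (Sum.inl : D.E → (D.mul D').E) rfl rfl rfl⟩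

lemma IsCircular.isTight (h : D.IsCircular) (hchain : HasClosedChain ls D) (hne : ls ≠ [])
    (hls : ls.IsChain (· ≠ ·)) {π : Setoid D.V} (hok : D.ok π) (hroots : π D.vout D.vin) :
    IsTight (Quotient.mk π ∘ D.src) (Quotient.mk π ∘ D.tgt) D.col := by
  have hok' : D.ok (Setoid.ker (Quotient.mk π)) := by rwa [Setoid.ker_mk_eq]
  obtain ⟨hconn, hedge⟩ := h (Quotient.mk π) hok'
  refine ⟨fun a b => ?_, fun e => not_not.mpr ?_, ?_⟩
  · obtain ⟨v, rfl⟩ := Quotient.exists_rep a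
    obtain ⟨w, rfl⟩ := Quotient.exists_rep b
    exact (hconn v).trans (reachOn_symm (hconn w))
  · refine reachOn_closed_of_roots (f := id) rfl rfl ?_ (fun _ he => he) (hedge e)
    rw [show Quotient.mk π D.vout = Quotient.mk π D.vin from Quotient.sound hroots]
    exact .refl
  · obtain ⟨a, ha⟩ := hchain _ hok'
    exact ha.exists_isLive hne hls

end Diagram

section Permuted

variable {κ K ι : Type}

/-- A family of matrices with the rows and columns of all the matrices of colour `ℓ` permuted by
`σ ℓ`. -/
def permuted (σ : κ → Equiv.Perm ι) (A : κ → K → Matrix ι ι ℂ) (ℓ : κ) (k : K) : Matrix ι ι ℂ :=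
  (A ℓ k).submatrix (σ ℓ) (σ ℓ)

lemma permuted_permuted (σ τ : κ → Equiv.Perm ι) (A : κ → K → Matrix ι ι ℂ) :
    permuted τ (permuted σ A) = permuted (fun ℓ => σ ℓ * τ ℓ) A := rfl

lemma signed_permuted (σ : κ → Equiv.Perm ι) (A : κ → K → Matrix ι ι ℂ) (ℓ : κ) (x : K × Bool)
    (i j : ι) : signed (permuted σ A) ℓ x i j = signed A ℓ x (σ ℓ i) (σ ℓ j) := by
  rcases x with ⟨k, _ | _⟩ <;> rfl

end Permuted

namespace Diagram

section Centered

variable {κ K : Type} {L : ℕ}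

/-- The diagram of the monomial `g₀ X_{k(1)} g₁ ⋯ X_{k(d)} g_d`, whose letters `X` have colour
`ℓ`. -/
def cactusMonomial (ℓ : Fin L) (d : ℕ) (k : ℕ → K) (g : ℕ → GraphMonomial L K) :
    Diagram (Fin L) K :=
  (ofMonomial (g 0)).mul
    (listProd (List.ofFn fun j : Fin d => (edge ℓ (k (j + 1))).mul (ofMonomial (g (j + 1)))))

lemma eval_cactusMonomial {N : ℕ} (A : Fin L → K → Matrix (Fin N) (Fin N) ℂ) (ℓ : Fin L) (d : ℕ)
    (k : ℕ → K) (g : ℕ → GraphMonomial L K) :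
    (cactusMonomial ℓ d k g).eval A = cactusMonomialEval A ℓ d k g := by
  rw [cactusMonomial, cactusMonomialEval, eval_mul, eval_listProd, eval_ofMonomial, List.map_ofFn]
  simp only [Function.comp_def, eval_mul, eval_edge, eval_ofMonomial]

lemma isCircular_cactusMonomial (ℓ : Fin L) {d : ℕ} (k : ℕ → K) {g : ℕ → GraphMonomial L K}
    (hg : ∀ j ≤ d, (g j).IsOrientedCactus) : (cactusMonomial ℓ d k g).IsCircular := by
  refine (isCircular_ofMonomial (hg 0 d.zero_le)).mul (isCircular_listProd ?_)
  rw [List.forall_mem_ofFn_iff]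
  exact fun j => (isCircular_edge _ _).mul (isCircular_ofMonomial (hg _ j.2))

lemma joinedBy_cactusMonomial (ℓ : Fin L) {d : ℕ} (k : ℕ → K) {g : ℕ → GraphMonomial L K}
    (hg : ∀ j ≤ d, (g j).vin = (g j).vout) : JoinedBy ℓ (cactusMonomial ℓ d k g) := by
  refine (joinedBy_ofMonomial (hg 0 d.zero_le) ℓ).mul (joinedBy_listProd ?_)
  rw [List.forall_mem_ofFn_iff]
  exact fun j => (joinedBy_edge _ _).mul (joinedBy_ofMonomial (hg _ j.2) ℓ)

/-- The diagonal part of the product of the off-diagonal parts of the given diagrams. -/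
def centered {n : ℕ} (f : Fin n → Diagram κ K) : Diagram κ K :=
  (listProd ((List.finRange n).map fun i => (f i).offDiag)).diag

lemma eval_centered {N n : ℕ} (A : κ → K → Matrix (Fin N) (Fin N) ℂ) (f : Fin n → Diagram κ K) :
    (centered f).eval A = dproj (centeredProd fun i => (f i).eval A) := by
  rw [centered, eval_diag, eval_listProd, centeredProd, List.map_map, List.ofFn_eq_map]
  simp only [Function.comp_def, eval_offDiag]

lemma isCircular_centered {n : ℕ} {f : Fin n → Diagram κ K} (h : ∀ i, (f i).IsCircular) :
    (centered f).IsCircular :=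
  (isCircular_listProd (List.forall_mem_map.mpr fun i _ => (h i).offDiag)).diag

lemma hasClosedChain_centered {n : ℕ} {f : Fin n → Diagram κ K} {ℓ : Fin n → κ}
    (h : ∀ i, JoinedBy (ℓ i) (f i)) : HasClosedChain ((List.finRange n).map ℓ) (centered f) :=
  (chainBy_listProd_offDiag h _).diag

/-- The diagram of `(ε ε*) ^ p`. -/
def absPow (ε : Diagram κ K) (p : ℕ) : Diagram κ K := listProd (List.replicate p (ε.mul ε.star))

lemma eval_absPow {ι : Type} [Fintype ι] [DecidableEq ι] (ε : Diagram κ K) (p : ℕ)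
    (A : κ → K → Matrix ι ι ℂ) : (ε.absPow p).eval A = (ε.eval A * (ε.eval A)ᴴ) ^ p := by
  rw [absPow, eval_listProd, List.map_replicate, List.prod_replicate, eval_mul, eval_star]

lemma IsCircular.absPow {ε : Diagram κ K} (h : ε.IsCircular) (p : ℕ) : (ε.absPow p).IsCircular :=
  isCircular_listProd fun _ hD => List.eq_of_mem_replicate hD ▸ h.mul h.star

lemma HasClosedChain.absPow {ε : Diagram κ K} {ls : List κ} (h : HasClosedChain ls ε) {p : ℕ}
    (hp : p ≠ 0) : HasClosedChain ls (ε.absPow p) := by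
  obtain ⟨p, rfl⟩ := Nat.exists_eq_succ_of_ne_zero hp
  exact (h.mul_right ε.star).mul_right (ε.absPow p)

end Centered

section Permuted

variable {κ K ι : Type} (D : Diagram κ K) (A : κ → K → Matrix ι ι ℂ)

lemma weight_permuted (σ : κ → Equiv.Perm ι) (φ : D.V → ι) :
    D.weight (permuted σ A) φ =
      ∏ e, signed A (D.col e) (D.lab e) (σ (D.col e) (φ (D.tgt e))) (σ (D.col e) (φ (D.src e))) :=
  Finset.prod_congr rfl fun _ _ => signed_permuted _ _ _ _ _ _

lemma trace_eval_permuted_const [Fintype ι] [DecidableEq ι] (τ : Equiv.Perm ι) :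
    (D.eval (permuted (fun _ => τ) A)).trace = (D.eval A).trace := by
  have hker : ∀ φ : D.V → ι, Setoid.ker (τ ∘ φ) = Setoid.ker φ := fun φ =>
    Setoid.ext fun _ _ => τ.injective.eq_iff
  rw [trace_eval, trace_eval]
  refine Finset.sum_equiv (Equiv.arrowCongr (Equiv.refl D.V) τ) (fun φ => ?_) fun φ _ =>
    D.weight_permuted A _ φ
  change _ ↔ τ ∘ φ ∈ D.closedLabellings ι
  simp [closedLabellings, hker]

end Permuted

section Bound

open scoped Matrix.Norms.L2Operator

variable {κ K ι : Type} [Fintype ι] [DecidableEq ι] {D : Diagram κ K} {A : κ → K → Matrix ι ι ℂ}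
  {C : ℝ}

lemma norm_signed (A : κ → K → Matrix ι ι ℂ) (ℓ : κ) (x : K × Bool) :
    ‖signed A ℓ x‖ = ‖A ℓ x.1‖ := by
  rcases x with ⟨k, _ | _⟩
  · exact Matrix.l2_opNorm_conjTranspose _
  · rfl

lemma norm_weight_permuted_le (hA : ∀ e, ‖A (D.col e) (D.lab e).1‖ ≤ C) (σ : κ → Equiv.Perm ι)
    (φ : D.V → ι) : ‖D.weight (permuted σ A) φ‖ ≤ C ^ Fintype.card D.E := by
  rw [weight_permuted, norm_prod, ← Finset.card_univ, ← Finset.prod_const]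
  refine Finset.prod_le_prod (fun _ _ => norm_nonneg _) fun e _ => ?_
  exact (norm_entry_le_l2_opNorm _ _ _).trans ((norm_signed _ _ _).trans_le (hA e))

/-- A bound for the traces of a diagram evaluated at matrices of norm at most `C`, averaged over
the permutations of the colours. It does not depend on the size of the matrices. -/
def traceBound [Fintype κ] (D : Diagram κ K) (C : ℝ) : ℝ :=
  C ^ Fintype.card D.E *
    ∑ π : Setoid D.V, tightConst (Fintype.card (Quotient π)) (Fintype.card D.E) (Fintype.card κ)

lemma norm_sum_trace_eval_permuted_le [Fintype κ] [Nonempty ι] (hD : D.IsCircular) {ls : List κ}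
    (hchain : HasClosedChain ls D) (hne : ls ≠ []) (hls : ls.IsChain (· ≠ ·)) (hC : 0 < C)
    (hA : ∀ e, ‖A (D.col e) (D.lab e).1‖ ≤ C) (hcard : 2 * Fintype.card D.V ≤ Fintype.card ι) :
    ‖∑ σ : κ → Equiv.Perm ι, (D.eval (permuted σ A)).trace‖ ≤
      ((Fintype.card ι).factorial : ℝ) ^ Fintype.card κ * D.traceBound C := by
  obtain rfl : ‹DecidableEq ι› = Classical.decEq ι := Subsingleton.elim _ _
  have hC' : (C : ℂ) ≠ 0 := Complex.ofReal_ne_zero.mpr hC.ne'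
  let B : D.E → Matrix ι ι ℂ := fun e => (C : ℂ)⁻¹ • signed A (D.col e) (D.lab e)
  have hB : ∀ e, ‖B e‖ ≤ 1 := fun e => by
    rw [norm_smul, norm_signed, norm_inv, Complex.norm_real, Real.norm_of_nonneg hC.le]
    exact (inv_mul_le_one₀ hC).mpr (hA e)
  have hsigned : ∀ e i j, signed A (D.col e) (D.lab e) i j = C * B e i j := fun e i j =>
    (mul_inv_cancel_left₀ hC' _).symm
  have htight : ∀ φ ∈ D.closedLabellings ι, IsTight (Quotient.mk (Setoid.ker φ) ∘ D.src)
      (Quotient.mk (Setoid.ker φ) ∘ D.tgt) D.col := fun φ hφ => by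
    obtain ⟨-, hok, hroots⟩ := Finset.mem_filter.mp hφ
    exact hD.isTight hchain hne hls hok hroots
  have hbound := norm_sum_perms_sum_prod_le D.src D.tgt D.col htight hB hcard
  have hscale : ∀ σ : κ → Equiv.Perm ι, (D.eval (permuted σ A)).trace =
      (C : ℂ) ^ Fintype.card D.E * ∑ φ ∈ D.closedLabellings ι,
        ∏ e, B e (σ (D.col e) (φ (D.tgt e))) (σ (D.col e) (φ (D.src e))) := fun σ => by
    rw [trace_eval, Finset.mul_sum]
    refine Finset.sum_congr rfl fun φ _ => ?_
    rw [weight_permuted, Finset.prod_congr rfl fun e _ => hsigned e _ _, Finset.prod_mul_distrib,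
      Finset.prod_const, Finset.card_univ]
  calc ‖∑ σ : κ → Equiv.Perm ι, (D.eval (permuted σ A)).trace‖
      = C ^ Fintype.card D.E * ‖∑ σ : κ → Equiv.Perm ι, ∑ φ ∈ D.closedLabellings ι,
          ∏ e, B e (σ (D.col e) (φ (D.tgt e))) (σ (D.col e) (φ (D.src e)))‖ := by
        rw [Finset.sum_congr rfl fun σ _ => hscale σ, ← Finset.mul_sum, norm_mul, norm_pow,
          Complex.norm_real, Real.norm_of_nonneg hC.le]
    _ ≤ C ^ Fintype.card D.E * _ := mul_le_mul_of_nonneg_left hbound (pow_nonneg hC.le _)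
    _ = ((Fintype.card ι).factorial : ℝ) ^ Fintype.card κ * D.traceBound C :=
        mul_left_comm _ _ _

end Bound

end Diagram

/-! ### Expectations -/

section Independence

variable {Ω : Type*} [MeasurableSpace Ω] {μ : Measure Ω}

lemma integral_comp_eq_of_iIndepFun {κ G : Type*} {S : κ → Type*} [Finite κ]
    [∀ ℓ, MeasurableSpace (S ℓ)] [NormedAddCommGroup G] [NormedSpace ℝ G] [IsProbabilityMeasure μ]
    {X : ∀ ℓ, Ω → S ℓ} (hX : ∀ ℓ, Measurable (X ℓ)) (hind : iIndepFun X μ) {t : ∀ ℓ, S ℓ → S ℓ}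
    (ht : ∀ ℓ, Measurable (t ℓ)) (hlaw : ∀ ℓ, μ.map (t ℓ ∘ X ℓ) = μ.map (X ℓ))
    {F : (∀ ℓ, S ℓ) → G} (hF : StronglyMeasurable F) :
    ∫ ω, F (fun ℓ => t ℓ (X ℓ ω)) ∂μ = ∫ ω, F (fun ℓ => X ℓ ω) ∂μ := by
  cases nonempty_fintype κ
  have htX : ∀ ℓ, Measurable (t ℓ ∘ X ℓ) := fun ℓ => (ht ℓ).comp (hX ℓ)
  have hlaw' : μ.map (fun ω ℓ => t ℓ (X ℓ ω)) = μ.map fun ω ℓ => X ℓ ω := by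
    rw [(iIndepFun_iff_map_fun_eq_pi_map fun ℓ => (hX ℓ).aemeasurable).mp hind, ← funext hlaw]
    exact (iIndepFun_iff_map_fun_eq_pi_map fun ℓ => (htX ℓ).aemeasurable).mp (hind.comp t ht)
  calc ∫ ω, F (fun ℓ => t ℓ (X ℓ ω)) ∂μ
      = ∫ x, F x ∂μ.map fun ω ℓ => t ℓ (X ℓ ω) :=
        (integral_map (measurable_pi_lambda _ htX).aemeasurable hF.aestronglyMeasurable).symm
    _ = ∫ ω, F (fun ℓ => X ℓ ω) ∂μ := by
        rw [hlaw']
        exact integral_map (measurable_pi_lambda _ hX).aemeasurable hF.aestronglyMeasurable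

end Independence

lemma famSigma_eq_comap {Ω K : Type} [MeasurableSpace Ω] {N : ℕ}
    (A : K → Ω → Matrix (Fin N) (Fin N) ℂ) :
    famSigma A =
      MeasurableSpace.comap (fun ω (k : K) (i j : Fin N) => A k ω i j) inferInstance := by
  simp only [famSigma, MeasurableSpace.pi, MeasurableSpace.comap_iSup, MeasurableSpace.comap_comp,
    Function.comp_def]

namespace Diagram

section Measurability

variable {α κ K ι : Type} [MeasurableSpace α] [Fintype ι] [DecidableEq ι]
  {A : α → κ → K → Matrix ι ι ℂ}

lemma measurable_trace_eval (D : Diagram κ K) (hA : ∀ ℓ k i j, Measurable fun a => A a ℓ k i j) :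
    Measurable fun a => (D.eval (A a)).trace := by
  simp only [trace_eval, weight]
  refine Finset.measurable_sum _ fun φ _ => Finset.measurable_prod _ fun e _ => ?_
  rcases D.lab e with ⟨k, _ | _⟩
  · exact Complex.continuous_conj.measurable.comp (hA _ _ _ _)
  · exact hA _ _ _ _

open scoped Matrix.Norms.L2Operator in
lemma integrable_trace_eval_permuted {μ : Measure α} [IsFiniteMeasure μ] (D : Diagram κ K)
    (hA : ∀ ℓ k i j, Measurable fun a => A a ℓ k i j) {C : ℝ}
    (hC : ∀ᵐ a ∂μ, ∀ e, ‖A a (D.col e) (D.lab e).1‖ ≤ C) (σ : κ → Equiv.Perm ι) :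
    Integrable (fun a => (D.eval (permuted σ (A a))).trace) μ := by
  refine Integrable.of_bound (C := (D.closedLabellings ι).card • C ^ Fintype.card D.E)
    (D.measurable_trace_eval fun ℓ k i j => hA ℓ k _ _).aestronglyMeasurable ?_
  filter_upwards [hC] with a ha
  rw [trace_eval, ← Finset.sum_const]
  exact norm_sum_le_of_le _ fun φ _ => norm_weight_permuted_le ha σ φ

end Measurability

section Averaging

variable {Ω κ K : Type} [MeasurableSpace Ω] {μ : Measure Ω} [IsProbabilityMeasure μ]
  {N : ℕ} {D : Diagram κ K} {A : κ → K → Ω → Matrix (Fin N) (Fin N) ℂ} {ℓ₀ : κ}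

-- Relabelling all the families by `(σ ℓ₀)⁻¹` does not change the trace, so that the exceptional
-- family may be left alone.
lemma integral_trace_eval_permuted [Finite κ] (D : Diagram κ K)
    (hmeas : ∀ ℓ k, EntriesMeasurable (A ℓ k))
    (hindep : iIndep (fun ℓ => famSigma (A ℓ)) μ)
    (hperm : ∀ ℓ, ℓ ≠ ℓ₀ → PermInvariant μ (A ℓ)) (σ : κ → Equiv.Perm (Fin N)) :
    ∫ ω, (D.eval (permuted σ fun ℓ k => A ℓ k ω)).trace ∂μ =
      ∫ ω, (D.eval fun ℓ k => A ℓ k ω).trace ∂μ := by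
  let X : κ → Ω → K → Fin N → Fin N → ℂ := fun ℓ ω k i j => A ℓ k ω i j
  have hX : ∀ ℓ, Measurable (X ℓ) := fun ℓ => measurable_pi_lambda _ fun k =>
    measurable_pi_lambda _ fun i => measurable_pi_lambda _ fun j => hmeas ℓ k i j
  have hindep' : iIndepFun X μ := by
    simp only [famSigma_eq_comap] at hindep
    exact hindep
  let ρ : κ → Equiv.Perm (Fin N) := fun ℓ => σ ℓ * (σ ℓ₀)⁻¹
  have hσ : ∀ B : κ → K → Matrix (Fin N) (Fin N) ℂ,
      (D.eval (permuted σ B)).trace = (D.eval (permuted ρ B)).trace := fun B => by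
    rw [← D.trace_eval_permuted_const (permuted ρ B) (σ ℓ₀), permuted_permuted]
    simp only [ρ, inv_mul_cancel_right]
  simp only [hσ]
  refine integral_comp_eq_of_iIndepFun hX hindep'
    (t := fun ℓ x k i j => x k (ρ ℓ i) (ρ ℓ j)) (fun ℓ => by fun_prop) (fun ℓ => ?_)
    (F := fun x => (D.eval fun ℓ k => Matrix.of (x ℓ k)).trace)
    (D.measurable_trace_eval fun ℓ k i j => ?_).stronglyMeasurable
  · by_cases hℓ : ℓ = ℓ₀
    · subst hℓ
      simp only [ρ, mul_inv_cancel, Equiv.Perm.coe_one, id_eq]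
      rfl
    · exact hperm ℓ hℓ (ρ ℓ)
  · simp only [Matrix.of_apply]
    fun_prop

open scoped Matrix.Norms.L2Operator

lemma factorial_pow_mul_integral_trace_eval [Fintype κ]
    (hmeas : ∀ ℓ k, EntriesMeasurable (A ℓ k))
    (hindep : iIndep (fun ℓ => famSigma (A ℓ)) μ)
    (hperm : ∀ ℓ, ℓ ≠ ℓ₀ → PermInvariant μ (A ℓ)) {C : ℝ}
    (hA : ∀ᵐ ω ∂μ, ∀ e, ‖A (D.col e) (D.lab e).1 ω‖ ≤ C) :
    (N.factorial : ℂ) ^ Fintype.card κ * ∫ ω, (D.eval fun ℓ k => A ℓ k ω).trace ∂μ =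
      ∫ ω, ∑ σ : κ → Equiv.Perm (Fin N), (D.eval (permuted σ fun ℓ k => A ℓ k ω)).trace ∂μ := by
  rw [integral_finsetSum _ fun σ _ => D.integrable_trace_eval_permuted hmeas hA σ]
  simp only [integral_trace_eval_permuted D hmeas hindep hperm]
  rw [Finset.sum_const, nsmul_eq_mul, Finset.card_univ, Fintype.card_fun, Fintype.card_perm,
    Fintype.card_fin, Nat.cast_pow]

lemma norm_integral_trace_eval_le [Fintype κ] (hD : D.IsCircular) {ls : List κ}
    (hchain : HasClosedChain ls D)
    (hne : ls ≠ []) (hls : ls.IsChain (· ≠ ·)) (hmeas : ∀ ℓ k, EntriesMeasurable (A ℓ k))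
    (hindep : iIndep (fun ℓ => famSigma (A ℓ)) μ)
    (hperm : ∀ ℓ, ℓ ≠ ℓ₀ → PermInvariant μ (A ℓ)) {C : ℝ} (hC : 0 < C)
    (hA : ∀ᵐ ω ∂μ, ∀ e, ‖A (D.col e) (D.lab e).1 ω‖ ≤ C) [NeZero N]
    (hN : 2 * Fintype.card D.V ≤ N) :
    ‖∫ ω, (D.eval fun ℓ k => A ℓ k ω).trace ∂μ‖ ≤ D.traceBound C := by
  have hpointwise : ∀ᵐ ω ∂μ,
      ‖∑ σ : κ → Equiv.Perm (Fin N), (D.eval (permuted σ fun ℓ k => A ℓ k ω)).trace‖ ≤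
        (N.factorial : ℝ) ^ Fintype.card κ * D.traceBound C := by
    filter_upwards [hA] with ω hω
    have h := norm_sum_trace_eval_permuted_le (A := fun ℓ k => A ℓ k ω) hD hchain hne hls hC hω
      (hN.trans_eq (Fintype.card_fin N).symm)
    rwa [Fintype.card_fin] at h
  have hbound := norm_integral_le_of_norm_le_const hpointwise
  rw [← factorial_pow_mul_integral_trace_eval hmeas hindep hperm hA, norm_mul, norm_pow,
    Complex.norm_natCast, probReal_univ, mul_one] at hbound
  exact le_of_mul_le_mul_left hbound (by positivity)

end Averaging

open scoped Matrix.Norms.L2Operator in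
theorem isBigO_integral_trace_eval {Ω κ K : Type} [MeasurableSpace Ω] {μ : Measure Ω}
    [IsProbabilityMeasure μ] [Finite κ] {D : Diagram κ K} (hD : D.IsCircular) {ls : List κ}
    (hchain : HasClosedChain ls D) (hne : ls ≠ []) (hls : ls.IsChain (· ≠ ·))
    {A : (N : ℕ) → κ → K → Ω → Matrix (Fin N) (Fin N) ℂ}
    (hmeas : ∀ N ℓ k, EntriesMeasurable (A N ℓ k))
    (hindep : ∀ N, iIndep (fun ℓ => famSigma (A N ℓ)) μ) {ℓ₀ : κ}
    (hperm : ∀ ℓ, ℓ ≠ ℓ₀ → ∀ N, PermInvariant μ (A N ℓ)) {C : ℝ}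
    (hA : ∀ N ℓ k, ∀ᵐ ω ∂μ, ‖A N ℓ k ω‖ ≤ C) :
    (fun N => ∫ ω, (D.eval fun ℓ k => A N ℓ k ω).trace ∂μ) =O[atTop] fun _ => (1 : ℝ) := by
  cases nonempty_fintype κ
  refine IsBigO.of_bound (D.traceBound (max C 1)) ?_
  filter_upwards [eventually_ge_atTop (2 * Fintype.card D.V), eventually_ne_atTop 0] with N hN hN0
  have : NeZero N := ⟨hN0⟩
  have hA' : ∀ᵐ ω ∂μ, ∀ e, ‖A N (D.col e) (D.lab e).1 ω‖ ≤ max C 1 :=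
    ae_all_iff.mpr fun e => (hA N _ _).mono fun _ h => h.trans (le_max_left C 1)
  rw [norm_one, mul_one]
  exact norm_integral_trace_eval_le hD hchain hne hls (hmeas N) (hindep N)
    (fun ℓ hℓ => hperm ℓ hℓ N) (lt_max_of_lt_right one_pos) hA' hN

end Diagram

lemma tendsto_inv_mul_of_isBigO_one {u : ℕ → ℂ} (hu : u =O[atTop] fun _ => (1 : ℝ)) :
    Tendsto (fun N : ℕ => (N : ℂ)⁻¹ * u N) atTop (nhds 0) := by
  have hinv : Tendsto (fun N : ℕ => (N : ℂ)⁻¹) atTop (nhds 0) :=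
    tendsto_inv_atTop_nhds_zero_nat
  exact hinv.zero_mul_isBoundedUnder_le hu.isBoundedUnder_le

theorem asymptotically_free_amalg_cactus_coefficients_general
    {Ω : Type} [MeasurableSpace Ω] (μ : Measure Ω) [IsProbabilityMeasure μ]
    {K : Type} {L : ℕ} (A : (N : ℕ) → Fin L → K → Ω → Matrix (Fin N) (Fin N) ℂ)
    (hmeas : ∀ N ℓ k, EntriesMeasurable (A N ℓ k)) (hop : UnifOpNormBound μ A)
    (hindep : IndepFamilies μ A)
    (hperm : ∃ ℓ₀ : Fin L, ∀ ℓ : Fin L, ℓ ≠ ℓ₀ → ∀ N : ℕ, PermInvariant μ (A N ℓ))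
    (n : ℕ) (hn : n ≠ 0) (ℓv : Fin n → Fin L)
    (hadj : ∀ (i : ℕ) (h1 : i + 1 < n), ℓv ⟨i, Nat.lt_of_succ_lt h1⟩ ≠ ℓv ⟨i + 1, h1⟩)
    (d : Fin n → ℕ) (kv : Fin n → ℕ → K) (g : Fin n → ℕ → GraphMonomial L K)
    (hg : ∀ (i : Fin n) (j : ℕ), j ≤ d i → (g i j).IsCactusType) (p : ℕ) (hp : 1 ≤ p) :
    (fun N : ℕ => ∫ ω,
      (fun ε : Matrix (Fin N) (Fin N) ℂ => Matrix.trace ((ε * εᴴ) ^ p))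
        (dproj (centeredProd fun i : Fin n =>
          cactusMonomialEval (fun ℓ k => A N ℓ k ω) (ℓv i) (d i) (kv i) (g i))) ∂μ)
      =O[atTop] fun _ => (1 : ℝ) := by
  obtain ⟨C, hC⟩ := hop
  obtain ⟨ℓ₀, hℓ₀⟩ := hperm
  let f : Fin n → Diagram (Fin L) K := fun i => Diagram.cactusMonomial (ℓv i) (d i) (kv i) (g i)
  have hcirc : (Diagram.centered f).IsCircular := Diagram.isCircular_centered fun i =>
    Diagram.isCircular_cactusMonomial _ _ fun j hj => (hg i j hj).2
  have hchain : Diagram.HasClosedChain ((List.finRange n).map ℓv) (Diagram.centered f) :=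
    Diagram.hasClosedChain_centered fun i =>
      Diagram.joinedBy_cactusMonomial _ _ fun j hj => (hg i j hj).1
  have hne : (List.finRange n).map ℓv ≠ [] := by
    simpa only [ne_eq, List.map_eq_nil_iff, List.finRange_eq_nil_iff] using hn
  have hls : ((List.finRange n).map ℓv).IsChain (· ≠ ·) :=
    List.isChain_iff_getElem.mpr fun i hi => by simpa using hadj i (by simpa using hi)
  simpa only [Diagram.eval_absPow, Diagram.eval_centered, f, Diagram.eval_cactusMonomial] using
    Diagram.isBigO_integral_trace_eval (hcirc.absPow p)
      (hchain.absPow (Nat.one_le_iff_ne_zero.mp hp)) hne hls hmeas hindep hℓ₀ hC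

/-- Theorem 2.2.
Independent families of random matrices, uniformly bounded in operator norm,
each of which, except possibly one, is permutation invariant, are
asymptotically free with amalgamation in `(𝒜_N, ℬ_N, Δ)`: for polynomials
`P_{N,i} = g_{0,i}(A_N) X_{k_i(1)} g_{1,i}(A_N) ⋯ X_{k_i(d_i)} g_{d_i,i}(A_N)`
with cactus-type coefficients, `E[(1/N) Tr((ε_N ε_N^*)^p)] → 0`. -/
theorem asymptotically_free_amalg_cactus_coefficients
    {Ω : Type} [MeasurableSpace Ω] (μ : Measure Ω) [IsProbabilityMeasure μ]
    {K : Type} [Nonempty K] [Finite K] {L : ℕ} (hL : 1 ≤ L)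
    (A : (N : ℕ) → Fin L → K → Ω → Matrix (Fin N) (Fin N) ℂ)
    (hmeas : ∀ N ℓ k, EntriesMeasurable (A N ℓ k))
    (hop : UnifOpNormBound μ A)
    (hindep : IndepFamilies μ A)
    (hperm : ∃ ℓ₀ : Fin L, ∀ ℓ : Fin L, ℓ ≠ ℓ₀ → ∀ N : ℕ, PermInvariant μ (A N ℓ))
    (n : ℕ) (hn : 2 ≤ n) (ℓv : Fin n → Fin L)
    (hadj : ∀ (i : ℕ) (h1 : i + 1 < n),
      ℓv ⟨i, Nat.lt_of_succ_lt h1⟩ ≠ ℓv ⟨i + 1, h1⟩)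
    (d : Fin n → ℕ) (hd : ∀ i, 1 ≤ d i) (kv : Fin n → ℕ → K)
    (g : Fin n → ℕ → GraphMonomial L K)
    (hg : ∀ (i : Fin n) (j : ℕ), j ≤ d i → (g i j).IsCactusType)
    (p : ℕ) (hp : 1 ≤ p) :
    Filter.Tendsto
      (fun N : ℕ => ∫ ω,
        (N : ℂ)⁻¹ *
          (fun ε : Matrix (Fin N) (Fin N) ℂ => Matrix.trace ((ε * εᴴ) ^ p))
            (dproj (centeredProd fun i : Fin n =>
              cactusMonomialEval (fun ℓ k => A N ℓ k ω) (ℓv i) (d i) (kv i) (g i))) ∂μ)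
      atTop (nhds 0) := by
  simp only [integral_const_mul]
  exact tendsto_inv_mul_of_isBigO_one <| asymptotically_free_amalg_cactus_coefficients_general μ A
    hmeas hop hindep hperm n (by lia) ℓv hadj d kv g hg p hp
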